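/- arXiv:2406.07311 — 2 statements merged into one kernel-verified Lean document; each statement's English description precedes it below -/
import Mathlib

section
/- Let n ≥ 3 and let λ be a partition of n. Then both Σ_{π ∈ C_λ} occ₍₁₃₂₎(π) and Σ_{π ∈ C_λ} occ₍₂₁₃₎(π) are equal to |C_λ| · ( (n−2)/6 + (n−3)·X₁/(2n(n−1)) − X₂/(2n(n−1)) − 3·X₃/(2n(n−1)) − X₄/(2n(n−1)) ), where occ₍₁₃₂₎(π) = #{i : 1 ≤ i ≤ n−2, π(i) < π(i+2) < π(i+1)} and occ₍₂₁₃₎(π) = #{i : 1 ≤ i ≤ n−2, π(i+1) < π(i) < π(i+2)} count occurrences of the consecutive (vincular) patterns (132) and (213) in π. -/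
open Equiv Finset

/-- The conjugacy class of permutations of `Fin n` with cycle type `lam`
(cycle type includes fixed points as parts of size 1, via `Equiv.Perm.partition`). -/
def conjClass (n : ℕ) (lam : n.Partition) : Finset (Equiv.Perm (Fin n)) :=
  Finset.univ.filter fun π => (Equiv.Perm.partition π).parts = lam.parts

/-!
Class sums are invariant under conjugation. Conjugating by the reversal exchanges the patterns
`132` and `213`, so it suffices to find the sum of both counts. Conjugating by the six permutations
of a window `{i, i + 1, i + 2}` replaces the indicator of an occurrence at `i` by a number that
depends only on how `π` maps the window to itself and to the two sides of it. A finite check shows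
that this number is a constant plus a signed count of motifs (partial functional digraphs on the
window), which no longer involves the order. As permutations act transitively on ordered triples,
the class sum of such a count is the same for every triple, and its average over all triples is
read off from the numbers of fixed points, 2-cycles and 3-cycles.
-/

section CycleCounts

variable {α : Type*} [Fintype α] [DecidableEq α]

theorem minimalPeriod_eq_card_support_cycleOf {π : Perm α} {u : α} (hu : π u ≠ u) :
    Function.minimalPeriod π u = #(π.cycleOf u).support := by
  have hcycle := Perm.isCycle_cycleOf π hu
  have hmoved : π.cycleOf u u ≠ u := by rwa [Perm.cycleOf_apply_self]
  rw [← hcycle.orderOf]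
  refine Nat.dvd_right_iff_eq.mp fun d => ?_
  rw [← Function.isPeriodicPt_iff_minimalPeriod_dvd, orderOf_dvd_iff_pow_eq_one,
    hcycle.pow_eq_one_iff' hmoved, Perm.cycleOf_pow_apply_self]
  rfl

theorem card_fixedPoints_eq_count_one (π : Perm α) :
    #{u | π u = u} = π.partition.parts.count 1 := by
  have hcycle : π.cycleType.count 1 = 0 :=
    Multiset.count_eq_zero.mpr fun h => (Perm.one_lt_of_mem_cycleType h).false
  rw [Perm.parts_partition, Multiset.count_add, Multiset.count_replicate_self, hcycle, zero_add,
    ← card_compl]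
  congr 1
  ext u
  simp

theorem card_minimalPeriod_eq (π : Perm α) {k : ℕ} (hk : k ≠ 1) :
    #{u | Function.minimalPeriod π u = k} = k * π.partition.parts.count k := by
  have hunion : ({u | Function.minimalPeriod π u = k} : Finset α) =
      {c ∈ π.cycleFactorsFinset | k = #c.support}.biUnion Perm.support := by
    ext u
    simp only [mem_filter, mem_univ, true_and, mem_biUnion]
    constructor
    · intro hperiod
      have hu : π u ≠ u := fun h => hk (hperiod ▸ Function.minimalPeriod_eq_one_iff_isFixedPt.mpr h)
      refine ⟨π.cycleOf u, ⟨?_, ?_⟩, Perm.mem_support_cycleOf_iff' hu |>.mpr (.refl π u)⟩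
      · exact Perm.cycleOf_mem_cycleFactorsFinset_iff.mpr (Perm.mem_support.mpr hu)
      · rw [← hperiod, minimalPeriod_eq_card_support_cycleOf hu]
    · rintro ⟨c, ⟨hc, rfl⟩, huc⟩
      have hu : π u ≠ u := Perm.mem_support.mp (Perm.mem_cycleFactorsFinset_support_le hc huc)
      rw [minimalPeriod_eq_card_support_cycleOf hu, ← Perm.cycle_is_cycleOf huc hc]
  have hdisjoint : Set.PairwiseDisjoint
      (SetLike.coe {c ∈ π.cycleFactorsFinset | k = #c.support}) Perm.support := by
    intro c hc d hd hcd
    exact Perm.disjoint_iff_disjoint_support.mp <| π.cycleFactorsFinset_pairwise_disjoint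
      (mem_filter.mp hc).1 (mem_filter.mp hd).1 hcd
  rw [hunion, card_biUnion hdisjoint, sum_congr rfl fun c hc => (mem_filter.mp hc).2.symm,
    sum_const, smul_eq_mul, mul_comm, Perm.parts_partition, Multiset.count_add,
    Multiset.count_replicate, if_neg hk.symm, add_zero, Perm.cycleType_def, Multiset.count_map]
  rfl

end CycleCounts

section TripleCounts

variable {α : Type*}

theorem strictMono_three_iff [Preorder α] {x : Fin 3 → α} :
    StrictMono x ↔ x 0 < x 1 ∧ x 1 < x 2 := by
  simp [Fin.strictMono_iff_lt_succ, Fin.forall_fin_two]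

theorem injective_three_iff {x : Fin 3 → α} :
    Function.Injective x ↔ x 0 ≠ x 1 ∧ x 0 ≠ x 2 ∧ x 1 ≠ x 2 := by
  simp only [Function.Injective, Fin.forall_fin_succ, Fin.isValue, Fin.succ_zero_eq_one,
    Fin.succ_one_eq_two, IsEmpty.forall_iff, and_true, imp_self, zero_ne_one, imp_false,
    Fin.reduceEq, true_and, Fin.succ_ne_zero, ne_eq]
  grind

/-- The embedding `Fin 3 ↪ α` with values `a`, `b`, `c`. -/
def embeddingThree (a b c : α) (hab : a ≠ b) (hac : a ≠ c) (hbc : b ≠ c) : Fin 3 ↪ α :=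
  ⟨![a, b, c], injective_three_iff.mpr ⟨hab, hac, hbc⟩⟩

theorem embedding_three_ext {e e' : Fin 3 ↪ α} (h₀ : e 0 = e' 0) (h₁ : e 1 = e' 1)
    (h₂ : e 2 = e' 2) : e = e' := by
  ext j
  fin_cases j <;> assumption

theorem embedding_three_ne (e : Fin 3 ↪ α) : e 0 ≠ e 1 ∧ e 0 ≠ e 2 ∧ e 1 ≠ e 2 :=
  injective_three_iff.mp e.injective

theorem card_embedding_forall {ι : Type*} [Fintype ι] [Fintype α] (P : α → Prop)
    [DecidablePred P] [DecidablePred fun e : ι ↪ α => ∀ i, P (e i)] [Fintype (ι ↪ α)] :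
    #{e : ι ↪ α | ∀ i, P (e i)} = (#{a | P a}).descFactorial (Fintype.card ι) := by
  rw [← Fintype.card_subtype, ← Fintype.card_subtype, ← Fintype.card_embedding_eq]
  exact Fintype.card_congr (Equiv.codRestrict ι {a | P a})

theorem cast_descFactorial_three (a : ℕ) : (a.descFactorial 3 : ℤ) = a * (a - 1) * (a - 2) := by
  rw [← descPochhammer_eval_eq_descFactorial]
  simp [descPochhammer_succ_eval]

variable [Fintype α] [DecidableEq α]

theorem card_embedding_fixed_and_arc (π : Perm α) :
    #{e : Fin 3 ↪ α | π (e 0) = e 0 ∧ π (e 1) = e 2} = #{u | π u = u} * #{u | π u ≠ u} := by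
  rw [← card_product]
  refine card_bij (fun e _ => (e 0, e 1)) ?_ ?_ ?_
  · intro e he
    have := embedding_three_ne e
    simp_all
  · intro e he e' he' h
    simp only [mem_filter, mem_univ, true_and, Prod.mk.injEq] at he he' h
    exact embedding_three_ext h.1 h.2 (by rw [← he.2, ← he'.2, h.2])
  · rintro ⟨u, v⟩ huv
    simp only [mem_product, mem_filter, mem_univ, true_and] at huv
    have huv' : u ≠ v := by grind
    have huπv : u ≠ π v := fun h => huv' (π.injective (huv.1.trans h))
    exact ⟨embeddingThree u v (π v) huv' huπv huv.2.symm, by simp [embeddingThree, huv.1], rfl⟩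

theorem card_embedding_path (π : Perm α) :
    #{e : Fin 3 ↪ α | π (e 0) = e 1 ∧ π (e 1) = e 2} = #{u | π u ≠ u ∧ π (π u) ≠ u} := by
  refine card_bij (fun e _ => e 0) ?_ ?_ ?_
  · intro e he
    have := embedding_three_ne e
    simp_all
  · intro e he e' he' h
    simp only [mem_filter, mem_univ, true_and] at he he'
    exact embedding_three_ext h (by grind) (by grind)
  · intro u hu
    simp only [mem_filter, mem_univ, true_and] at hu
    have h₁₂ : π u ≠ π (π u) := fun h => hu.1 (π.injective h).symm
    exact ⟨embeddingThree u (π u) (π (π u)) hu.1.symm hu.2.symm h₁₂, by simp [embeddingThree], rfl⟩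

theorem card_embedding_cycle (π : Perm α) :
    #{e : Fin 3 ↪ α | π (e 0) = e 1 ∧ π (e 1) = e 2 ∧ π (e 2) = e 0} =
      #{u | Function.minimalPeriod π u = 3} := by
  have : Fact (Nat.Prime 3) := ⟨Nat.prime_three⟩
  have hperiod (u : α) : Function.minimalPeriod π u = 3 ↔ π (π (π u)) = u ∧ π u ≠ u :=
    Function.minimalPeriod_eq_prime_iff
  refine card_bij (fun e _ => e 0) ?_ ?_ ?_
  · intro e he
    have := embedding_three_ne e
    simp_all
  · intro e he e' he' h
    simp only [mem_filter, mem_univ, true_and] at he he'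
    exact embedding_three_ext h (by grind) (by grind)
  · intro u hu
    simp only [mem_filter, mem_univ, true_and, hperiod] at hu
    obtain ⟨hcycle, hu⟩ := hu
    have h₀₂ : u ≠ π (π u) := by grind
    have h₁₂ : π u ≠ π (π u) := fun h => hu (π.injective h).symm
    exact ⟨embeddingThree u (π u) (π (π u)) hu.symm h₀₂ h₁₂, by simp [embeddingThree, hcycle], rfl⟩

theorem card_nonfixed_eq (π : Perm α) :
    (#{u | π u ≠ u} : ℤ) = Fintype.card α - π.partition.parts.count 1 := by
  rw [← card_fixedPoints_eq_count_one]
  have := card_filter_add_card_filter_not (s := univ) (fun u => π u = u)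
  rw [card_univ] at this
  grind

theorem card_not_period_two_eq (π : Perm α) :
    (#{u | π u ≠ u ∧ π (π u) ≠ u} : ℤ) =
      Fintype.card α - π.partition.parts.count 1 - 2 * π.partition.parts.count 2 := by
  have : Fact (Nat.Prime 2) := ⟨Nat.prime_two⟩
  have hperiod (u : α) : Function.minimalPeriod π u = 2 ↔ π (π u) = u ∧ π u ≠ u :=
    Function.minimalPeriod_eq_prime_iff
  have hsplit := card_filter_add_card_filter_not (s := {u | π u ≠ u}) (fun u => π (π u) = u)
  have htwo := card_minimalPeriod_eq π (k := 2) (by norm_num)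
  simp only [hperiod, and_comm] at htwo
  rw [filter_filter, filter_filter, htwo] at hsplit
  rw [← card_nonfixed_eq, ← hsplit]
  push_cast
  ring

/-- A weighted count of four motifs that a map `x j ↦ y j` can realize on the ordered triple `x`:
a fixed point next to an arc, a directed path, the identity and a directed 3-cycle. The weights are
the ones for which `card_sortingRelabelings_middle` holds. -/
def motifWeight (x y : Fin 3 → α) : ℤ :=
  3 * (if y 0 = x 0 ∧ y 1 = x 2 then 1 else 0) - 3 * (if y 0 = x 1 ∧ y 1 = x 2 then 1 else 0) -
    (if ∀ j, y j = x j then 1 else 0) + (if y 0 = x 1 ∧ y 1 = x 2 ∧ y 2 = x 0 then 1 else 0)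

theorem sum_embedding_motifWeight (π : Perm α) (n p q r : ℤ) (hn : n = Fintype.card α)
    (hp : p = π.partition.parts.count 1) (hq : q = π.partition.parts.count 2)
    (hr : r = π.partition.parts.count 3) :
    ∑ e : Fin 3 ↪ α, motifWeight e (π ∘ e) =
      3 * (p * (n - p)) - 3 * (n - p - 2 * q) - p * (p - 1) * (p - 2) + 3 * r := by
  simp only [motifWeight, Function.comp_apply, sum_add_distrib, sum_sub_distrib, ← mul_sum,
    sum_boole]
  rw [card_embedding_fixed_and_arc, card_embedding_path, card_embedding_cycle,
    card_embedding_forall fun u => π u = u, card_minimalPeriod_eq π (by norm_num),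
    Fintype.card_fin, card_not_period_two_eq, cast_descFactorial_three]
  push_cast
  rw [card_nonfixed_eq, card_fixedPoints_eq_count_one, ← hn, ← hp, ← hq, ← hr]

end TripleCounts

section Motif

variable {α β : Type*} [DecidableEq α] [DecidableEq β]

theorem motifWeight_comp_left {φ : α → β} {x y : Fin 3 → α}
    (hφ : ∀ j j', φ (y j) = φ (x j') ↔ y j = x j') :
    motifWeight (φ ∘ x) (φ ∘ y) = motifWeight x y := by
  simp only [motifWeight, Function.comp_apply, hφ]

theorem motifWeight_eq_zero {x y : Fin 3 → α}
    (h : ∀ j j', y j ∈ Set.range x → y j' ∈ Set.range x → j = j') : motifWeight x y = 0 := by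
  have h₀₁ : ¬(y 0 ∈ Set.range x ∧ y 1 ∈ Set.range x) := fun ⟨h₀, h₁⟩ =>
    absurd (h 0 1 h₀ h₁) (by decide)
  have hne (j j' : Fin 3) : ¬(y 0 = x j ∧ y 1 = x j') := fun ⟨h₀, h₁⟩ =>
    h₀₁ ⟨⟨j, h₀.symm⟩, ⟨j', h₁.symm⟩⟩
  have hcycle : ¬(y 0 = x 1 ∧ y 1 = x 2 ∧ y 2 = x 0) := fun hc => hne 1 2 ⟨hc.1, hc.2.1⟩
  have hid : ¬∀ j, y j = x j := fun hid => hne 0 1 ⟨hid 0, hid 1⟩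
  simp only [motifWeight, hne, hcycle, hid, if_false]
  norm_num

end Motif

section ConjugacyClassSums

variable {n : ℕ} {M : Type*} [AddCommMonoid M]

theorem sum_conjClass_conj (lam : n.Partition) (f : Perm (Fin n) → M) (σ : Perm (Fin n)) :
    ∑ π ∈ conjClass n lam, f (σ * π * σ⁻¹) = ∑ π ∈ conjClass n lam, f π := by
  refine sum_equiv (MulAut.conj σ).toEquiv (fun π => ?_) fun π _ => rfl
  have hconj : IsConj π (σ * π * σ⁻¹) := isConj_iff.mpr ⟨σ, rfl⟩
  simp [conjClass, Perm.partition_eq_of_isConj.mp hconj]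

theorem card_embedding_nsmul_sum_conjClass {ι : Type*} [Finite ι] [Fintype (ι ↪ Fin n)]
    (lam : n.Partition) (F : Perm (Fin n) → (ι ↪ Fin n) → M)
    (hF : ∀ σ π e, F (σ * π * σ⁻¹) (e.trans σ.toEmbedding) = F π e) (e₀ : ι ↪ Fin n) :
    Fintype.card (ι ↪ Fin n) • ∑ π ∈ conjClass n lam, F π e₀ =
      ∑ π ∈ conjClass n lam, ∑ e, F π e := by
  have hconst (e : ι ↪ Fin n) :
      ∑ π ∈ conjClass n lam, F π e = ∑ π ∈ conjClass n lam, F π e₀ := by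
    obtain ⟨σ, hσ⟩ := Perm.exists_extending_pair e e₀ e.injective e₀.injective
    have he₀ : e.trans σ.toEmbedding = e₀ := by
      ext i
      exact congrArg Fin.val (hσ i)
    rw [← sum_conjClass_conj lam (F · e₀) σ]
    exact sum_congr rfl fun π _ => by rw [← he₀, hF]
  rw [sum_comm, sum_congr rfl fun e _ => hconst e, sum_const, card_univ]

end ConjugacyClassSums

section Windows

variable {m k : ℕ}

/-- The window of `k + 1` consecutive positions `i, i + 1, …, i + k`. -/
def window (i : Fin m) : Fin (k + 1) ↪ Fin (m + k) where
  toFun j := ⟨i + j, by omega⟩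
  inj' j j' h := by simpa [Fin.ext_iff] using h

@[simp]
theorem val_window (i : Fin m) (j : Fin (k + 1)) : (window i j : ℕ) = i + j := rfl

theorem mem_range_window {i : Fin m} {x : Fin (m + k)} :
    x ∈ Set.range (window (k := k) i) ↔ (i : ℕ) ≤ x ∧ (x : ℕ) ≤ i + k := by
  constructor
  · rintro ⟨j, rfl⟩
    simp only [val_window]
    omega
  · rintro ⟨hi, hk⟩
    exact ⟨⟨x - i, by omega⟩, Fin.ext (by simp only [val_window]; omega)⟩

theorem ordConnected_range_window (i : Fin m) :
    (Set.range (window (k := k) i)).OrdConnected := by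
  refine Set.ordConnected_iff.mpr fun x hx y hy _ z hz => ?_
  rw [mem_range_window] at *
  exact ⟨hx.1.trans hz.1, le_trans hz.2 hy.2⟩

theorem window_rev (i : Fin m) (j : Fin (k + 1)) :
    window i.rev j.rev = (window i j).rev := by
  ext
  simp only [val_window, Fin.val_rev]
  omega

/-- The starting points of the windows on which `π` realizes a consecutive pattern of length
`k + 1`. The pattern is encoded by the permutation `s` listing the positions of the window by
increasing value of `π`, so that `132` is `swap 1 2` and `213` is `swap 0 1`. -/
def consecutiveOcc (s : Perm (Fin (k + 1))) (π : Perm (Fin (m + k))) : Finset (Fin m) :=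
  {i | StrictMono (π ∘ window i ∘ s)}

theorem strictMono_rev_comp_iff {a b : ℕ} {g : Fin a → Fin b} :
    StrictMono (Fin.rev ∘ g) ↔ StrictMono (g ∘ Fin.rev) := by
  constructor
  · exact fun h j j' hj => Fin.rev_lt_rev.mp (h (Fin.rev_lt_rev.mpr hj))
  · intro h j j' hj
    simpa using h (Fin.rev_lt_rev.mpr hj)

theorem card_consecutiveOcc_conj_revPerm (s : Perm (Fin (k + 1))) (π : Perm (Fin (m + k))) :
    #(consecutiveOcc s (Fin.revPerm * π * Fin.revPerm⁻¹)) =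
      #(consecutiveOcc (Fin.revPerm * s * Fin.revPerm⁻¹) π) := by
  refine card_equiv Fin.revPerm fun i => ?_
  simp only [consecutiveOcc, mem_filter_univ]
  have hleft : (Fin.revPerm * π * Fin.revPerm⁻¹ : Perm (Fin (m + k))) ∘ window i ∘ s =
      Fin.rev ∘ (π ∘ window i.rev ∘ Fin.rev ∘ s) := by
    ext j
    exact congrArg (fun x => ((π x).rev : ℕ)) (window_rev i (s j)).symm
  rw [hleft, strictMono_rev_comp_iff]
  rfl

theorem sum_card_consecutiveOcc_conj_revPerm (lam : (m + k).Partition) (s : Perm (Fin (k + 1))) :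
    ∑ π ∈ conjClass (m + k) lam, #(consecutiveOcc (Fin.revPerm * s * Fin.revPerm⁻¹) π) =
      ∑ π ∈ conjClass (m + k) lam, #(consecutiveOcc s π) := by
  simp only [← card_consecutiveOcc_conj_revPerm]
  exact sum_conjClass_conj lam (fun π => #(consecutiveOcc s π)) Fin.revPerm

end Windows

section ViaFintypeEmbedding

variable {ι α β : Type*} [Fintype ι] [DecidableEq α]

theorem conj_viaFintypeEmbedding_comp (π : Perm α) (ρ : Perm ι) (e : ι ↪ α) :
    (ρ⁻¹.viaFintypeEmbedding e * π * (ρ⁻¹.viaFintypeEmbedding e)⁻¹ : Perm α) ∘ e =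
      ρ⁻¹.viaFintypeEmbedding e ∘ π ∘ e ∘ ρ := by
  have hinv (j : ι) : (ρ⁻¹.viaFintypeEmbedding e)⁻¹ (e j) = e (ρ j) := by
    rw [Perm.inv_eq_iff_eq, Perm.viaFintypeEmbedding_apply_image]
    exact congrArg e (ρ.symm_apply_apply j).symm
  ext j
  exact congrArg (fun x => ρ⁻¹.viaFintypeEmbedding e (π x)) (hinv j)

theorem viaFintypeEmbedding_apply_mem_range (ρ : Perm ι) {e : ι ↪ α} {x : α}
    (hx : x ∈ Set.range e) : ρ.viaFintypeEmbedding e x ∈ Set.range e := by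
  obtain ⟨j, rfl⟩ := hx
  exact ⟨ρ j, (Perm.viaFintypeEmbedding_apply_image ..).symm⟩

theorem map_viaFintypeEmbedding [DecidableEq β] {e : ι ↪ α} {φ : α → β} {e' : ι ↪ β}
    (hφe : ∀ j, φ (e j) = e' j) (hφ : ∀ x j, φ x = e' j → x = e j) (ρ : Perm ι) (x : α) :
    φ (ρ.viaFintypeEmbedding e x) = ρ.viaFintypeEmbedding e' (φ x) := by
  by_cases hx : x ∈ Set.range e
  · obtain ⟨j, rfl⟩ := hx
    simp only [Perm.viaFintypeEmbedding_apply_image, hφe]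
  · have hφx : φ x ∉ Set.range e' := fun ⟨j, hj⟩ => hx ⟨j, (hφ x j hj.symm).symm⟩
    rw [Perm.viaFintypeEmbedding_apply_notMem_range _ _ hx,
      Perm.viaFintypeEmbedding_apply_notMem_range _ _ hφx]

end ViaFintypeEmbedding

section Relabeling

variable {k : ℕ} {α β : Type*} [LinearOrder α] [LinearOrder β]

/-- The relabelings `ρ` of the points `e j` for which, after conjugation by `ρ⁻¹`, a permutation
taking the values `f j` at `e j` takes increasing values at the points `e (s j)`. -/
def sortingRelabelings (s : Perm (Fin k)) (e : Fin k ↪ α) (f : Fin k → α) :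
    Finset (Perm (Fin k)) :=
  {ρ | StrictMono (ρ⁻¹.viaFintypeEmbedding e ∘ f ∘ ρ ∘ s)}

theorem factorial_mul_sum_card_consecutiveOcc {m : ℕ} (lam : (m + k).Partition)
    (s : Perm (Fin (k + 1))) :
    (k + 1).factorial * ∑ π ∈ conjClass (m + k) lam, #(consecutiveOcc s π) =
      ∑ π ∈ conjClass (m + k) lam, ∑ i : Fin m,
        #(sortingRelabelings s (window i) (π ∘ window i)) := by
  have hcard (i : Fin m) :
      (k + 1).factorial * ∑ π ∈ conjClass (m + k) lam, (if i ∈ consecutiveOcc s π then 1 else 0) =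
        ∑ π ∈ conjClass (m + k) lam, #(sortingRelabelings s (window i) (π ∘ window i)) := by
    have hperm : (k + 1).factorial = #(univ : Finset (Perm (Fin (k + 1)))) := by
      rw [card_univ, Fintype.card_perm, Fintype.card_fin]
    simp only [sortingRelabelings, card_filter]
    rw [sum_comm, hperm, ← smul_eq_mul, ← sum_const]
    refine sum_congr rfl fun ρ _ => ?_
    rw [← sum_conjClass_conj lam _ (ρ⁻¹.viaFintypeEmbedding (window i))]
    refine sum_congr rfl fun π _ => ?_
    simp only [consecutiveOcc, mem_filter_univ, ← Function.comp_assoc,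
      conj_viaFintypeEmbedding_comp]
  rw [sum_comm, ← sum_congr rfl fun i _ => hcard i, ← mul_sum, sum_comm]
  simp only [sum_boole, Nat.cast_id, filter_univ_mem]

theorem lt_iff_lt_of_ordConnected {S : Set α} (hS : S.OrdConnected) {x y z : α} (hx : x ∉ S)
    (hy : y ∈ S) (hz : z ∈ S) : x < y ↔ x < z := by
  have key {y z : α} (hy : y ∈ S) (hz : z ∈ S) (hxy : x < y) : x < z :=
    lt_of_not_ge fun hzx => hx (hS.out hz hy ⟨hzx, hxy.le⟩)
  exact ⟨key hy hz, key hz hy⟩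

theorem viaFintypeEmbedding_lt_iff {e : Fin k ↪ α} (he : (Set.range e).OrdConnected)
    (ρ : Perm (Fin k)) {x y : α} (hxy : x ∈ Set.range e → y ∈ Set.range e → x = y) :
    ρ.viaFintypeEmbedding e x < ρ.viaFintypeEmbedding e y ↔ x < y := by
  have hmem {z : α} (hz : z ∈ Set.range e) := viaFintypeEmbedding_apply_mem_range ρ hz
  have hfix {z : α} (hz : z ∉ Set.range e) : ρ.viaFintypeEmbedding e z = z :=
    Perm.viaFintypeEmbedding_apply_notMem_range _ _ hz
  by_cases hx : x ∈ Set.range e <;> by_cases hy : y ∈ Set.range e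
  · simp [hxy hx hy]
  · rw [hfix hy]
    exact lt_iff_lt_of_ordConnected (α := αᵒᵈ) he.dual hy (hmem hx) hx
  · rw [hfix hx]
    exact lt_iff_lt_of_ordConnected he hx (hmem hy) hy
  · rw [hfix hx, hfix hy]

theorem card_strictMono_comp_perm {f : Fin k → α} (hf : Function.Injective f) (s : Perm (Fin k)) :
    #{ρ : Perm (Fin k) | StrictMono (f ∘ ρ ∘ s)} = 1 := by
  have hmono (ρ : Perm (Fin k)) : StrictMono (f ∘ ρ ∘ s) ↔ Monotone (f ∘ (ρ * s : Perm (Fin k))) :=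
    ⟨StrictMono.monotone, fun h => h.strictMono_of_injective (hf.comp (ρ * s).injective)⟩
  refine card_eq_one.mpr ⟨Tuple.sort f * s⁻¹, ?_⟩
  ext ρ
  rw [mem_filter_univ, mem_singleton, hmono, eq_mul_inv_iff_mul_eq]
  refine ⟨fun h => ?_, fun h => h ▸ Tuple.monotone_sort f⟩
  exact Equiv.ext fun j => hf (congrFun (Tuple.unique_monotone h (Tuple.monotone_sort f)) j)

theorem card_sortingRelabelings_eq_one (s : Perm (Fin k)) {e : Fin k ↪ α}
    (he : (Set.range e).OrdConnected) {f : Fin k → α} (hf : Function.Injective f)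
    (hfe : ∀ j j', f j ∈ Set.range e → f j' ∈ Set.range e → j = j') :
    #(sortingRelabelings s e f) = 1 := by
  rw [← card_strictMono_comp_perm hf s, sortingRelabelings]
  congr 1
  ext ρ
  simp only [mem_filter_univ]
  exact forall₃_congr fun j j' _ =>
    viaFintypeEmbedding_lt_iff he _ fun hj hj' => congrArg f (hfe _ _ hj hj')

theorem sortingRelabelings_map (s : Perm (Fin k)) {e : Fin k ↪ α} {φ : α → β}
    (hmono : Monotone φ) {e' : Fin k ↪ β} (hφe : ∀ j, φ (e j) = e' j)
    (hφ : ∀ x j, φ x = e' j → x = e j) {f : Fin k → α} (hf : Function.Injective (φ ∘ f)) :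
    sortingRelabelings s e' (φ ∘ f) = sortingRelabelings s e f := by
  ext ρ
  simp only [sortingRelabelings, mem_filter_univ]
  have hcomm : ρ⁻¹.viaFintypeEmbedding e' ∘ (φ ∘ f) ∘ ρ ∘ s =
      φ ∘ ρ⁻¹.viaFintypeEmbedding e ∘ f ∘ ρ ∘ s := by
    ext j
    exact (map_viaFintypeEmbedding hφe hφ _ _).symm
  refine ⟨fun h j j' hj => hmono.reflect_lt ?_, fun h => ?_⟩
  · rw [hcomm] at h
    exact h hj
  · have hinj : Function.Injective (ρ⁻¹.viaFintypeEmbedding e' ∘ (φ ∘ f) ∘ ρ ∘ s) :=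
      (Equiv.injective _).comp (hf.comp (ρ.injective.comp s.injective))
    rw [hcomm] at hinj ⊢
    exact (hmono.comp h.monotone).strictMono_of_injective hinj

end Relabeling

section Compression

variable {m k : ℕ}

/-- The embedding of `Fin (k + 1)` into `Fin (k + 3)` avoiding the two extreme points. -/
def middle : Fin (k + 1) ↪ Fin (k + 3) := (Fin.succEmb (k + 1)).trans Fin.castSuccEmb

/-- The monotone map sending the window at `i` to the middle of `Fin (k + 3)` and collapsing the
points on either side of the window to the corresponding extreme point. -/
def compress (i : Fin m) (x : Fin (m + k)) : Fin (k + 3) :=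
  ⟨min (k + 2) (x + 1 - i), by omega⟩

theorem compress_monotone (i : Fin m) : Monotone (compress (k := k) i) := by
  intro x y hxy
  have : (x : ℕ) ≤ y := hxy
  simp only [compress, Fin.mk_le_mk]
  omega

theorem compress_window (i : Fin m) (j : Fin (k + 1)) : compress i (window i j) = middle j := by
  ext
  simp only [compress, val_window, middle, Function.Embedding.trans_apply, Fin.coe_succEmb,
    Fin.coe_castSuccEmb, Fin.val_succ, Fin.val_castSucc]
  omega

theorem eq_window_of_compress_eq_middle {i : Fin m} {x : Fin (m + k)} {j : Fin (k + 1)}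
    (h : compress i x = middle j) : x = window i j := by
  simp only [compress, middle, Function.Embedding.trans_apply, Fin.coe_succEmb,
    Fin.coe_castSuccEmb, Fin.ext_iff, Fin.val_succ, Fin.val_castSucc, val_window] at h ⊢
  omega

theorem viaFintypeEmbedding_middle (ρ : Perm (Fin 3)) :
    ⇑(ρ.viaFintypeEmbedding (middle : Fin 3 ↪ Fin 5)) =
      ![0, middle (ρ 0), middle (ρ 1), middle (ρ 2), 4] := by
  revert ρ
  decide +kernel

theorem card_sortingRelabelings_middle (f : Fin 3 → Fin 5) (hf : Function.Injective f) :
    3 * (#(sortingRelabelings (k := 3) (α := Fin 5) (swap 1 2) middle f) +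
        #(sortingRelabelings (k := 3) (α := Fin 5) (swap 0 1) middle f) : ℤ) =
      6 + ∑ ρ : Perm (Fin 3), motifWeight ((middle : Fin 3 ↪ Fin 5) ∘ ρ) (f ∘ ρ) := by
  simp only [sortingRelabelings, viaFintypeEmbedding_middle, strictMono_three_iff]
  revert f
  decide +kernel

theorem injective_compress_comp_or_subsingleton {i : Fin m} {f : Fin 3 → Fin (m + 2)}
    (hf : Function.Injective f) : Function.Injective (compress i ∘ f) ∨
      ∀ j j', f j ∈ Set.range (window (k := 2) i) → f j' ∈ Set.range (window (k := 2) i) →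
        j = j' := by
  refine or_iff_not_imp_left.mpr fun hninj j j' hj hj' => ?_
  obtain ⟨a, b, hab, hne⟩ := Function.not_injective_iff.mp hninj
  have houtside {a b : Fin 3} (hab : compress i (f a) = compress i (f b)) (hne : a ≠ b) :
      f a ∉ Set.range (window (k := 2) i) := by
    rintro ⟨l, hl⟩
    have hb : compress i (f b) = middle l := by rw [← hab, ← hl, compress_window]
    exact hne (hf (hl.symm.trans (eq_window_of_compress_eq_middle hb).symm))
  have hja : j ≠ a := fun h => houtside hab hne (h ▸ hj)
  have hjb : j ≠ b := fun h => houtside hab.symm hne.symm (h ▸ hj)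
  have hja' : j' ≠ a := fun h => houtside hab hne (h ▸ hj')
  have hjb' : j' ≠ b := fun h => houtside hab.symm hne.symm (h ▸ hj')
  omega

theorem card_sortingRelabelings_window (i : Fin m) {f : Fin 3 → Fin (m + 2)}
    (hf : Function.Injective f) :
    3 * (#(sortingRelabelings (swap 1 2) (window i) f) +
        #(sortingRelabelings (swap 0 1) (window i) f) : ℤ) =
      6 + ∑ ρ : Perm (Fin 3), motifWeight (window i ∘ ρ) (f ∘ ρ) := by
  rcases injective_compress_comp_or_subsingleton (i := i) hf with hcompress | houtside
  · have hreflect (x : Fin (m + 2)) (j : Fin 3) (h : compress i x = middle j) :=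
      eq_window_of_compress_eq_middle h
    have hmap (s : Perm (Fin 3)) := sortingRelabelings_map s (compress_monotone i)
      (compress_window i) hreflect hcompress
    rw [← hmap, ← hmap, card_sortingRelabelings_middle _ hcompress]
    congr 1
    refine sum_congr rfl fun ρ _ => ?_
    have hmiddle : middle ∘ ρ = compress i ∘ window i ∘ ρ :=
      funext fun j => (compress_window i (ρ j)).symm
    rw [hmiddle]
    refine motifWeight_comp_left fun j j' => ⟨fun h => ?_, congrArg _⟩
    exact hreflect _ _ (h.trans (compress_window i (ρ j')))
  · have hzero (ρ : Perm (Fin 3)) : motifWeight (window i ∘ ρ) (f ∘ ρ) = 0 := by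
      refine motifWeight_eq_zero fun j j' hj hj' => ρ.injective (houtside _ _ ?_ ?_)
      · exact Set.range_comp_subset_range _ _ hj
      · exact Set.range_comp_subset_range _ _ hj'
    rw [card_sortingRelabelings_eq_one _ (ordConnected_range_window i) hf houtside,
      card_sortingRelabelings_eq_one _ (ordConnected_range_window i) hf houtside,
      sum_congr rfl fun ρ _ => hzero ρ]
    simp

end Compression

section PatternSums

theorem sum_conjClass_motifWeight {n : ℕ} (lam : n.Partition) (p q r : ℤ)
    (hp : p = lam.parts.count 1) (hq : q = lam.parts.count 2) (hr : r = lam.parts.count 3)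
    (e : Fin 3 ↪ Fin n) :
    (n * (n - 1) * (n - 2) : ℤ) * ∑ π ∈ conjClass n lam, motifWeight e (π ∘ e) =
      #(conjClass n lam) *
        (3 * (p * (n - p)) - 3 * (n - p - 2 * q) - p * (p - 1) * (p - 2) + 3 * r) := by
  have hequivariant (σ π : Perm (Fin n)) (e : Fin 3 ↪ Fin n) :
      motifWeight (e.trans σ.toEmbedding)
        ((σ * π * σ⁻¹ : Perm (Fin n)) ∘ e.trans σ.toEmbedding) = motifWeight e (π ∘ e) := by
    have hconj : (σ * π * σ⁻¹ : Perm (Fin n)) ∘ e.trans σ.toEmbedding = σ ∘ π ∘ e := by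
      ext j
      simp
    rw [hconj]
    exact motifWeight_comp_left fun _ _ => σ.apply_eq_iff_eq
  have haverage := card_embedding_nsmul_sum_conjClass lam
    (fun π e => motifWeight e (π ∘ e)) hequivariant e
  rw [nsmul_eq_mul, Fintype.card_embedding_eq, Fintype.card_fin, Fintype.card_fin,
    cast_descFactorial_three] at haverage
  rw [haverage, ← nsmul_eq_mul, ← sum_const]
  refine sum_congr rfl fun π hπ => ?_
  have hparts : π.partition.parts = lam.parts := (mem_filter.mp hπ).2
  apply sum_embedding_motifWeight <;> simp_all

variable {m : ℕ}

theorem sum_card_consecutiveOcc_213_eq_132 (lam : (m + 2).Partition) :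
    ∑ π ∈ conjClass (m + 2) lam, #(consecutiveOcc (swap 0 1) π) =
      ∑ π ∈ conjClass (m + 2) lam, #(consecutiveOcc (swap 1 2) π) := by
  have hrev : Fin.revPerm * swap 1 2 * Fin.revPerm⁻¹ = (swap 0 1 : Perm (Fin 3)) := by decide
  rw [← hrev]
  exact sum_card_consecutiveOcc_conj_revPerm lam (swap 1 2)

theorem thirtySix_mul_sum_card_consecutiveOcc (lam : (m + 2).Partition) :
    36 * ((∑ π ∈ conjClass (m + 2) lam, #(consecutiveOcc (swap 1 2) π) : ℕ) : ℤ) =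
      6 * (m * #(conjClass (m + 2) lam)) +
        ∑ i : Fin m, ∑ ρ : Perm (Fin 3), ∑ π ∈ conjClass (m + 2) lam,
          motifWeight (ρ.toEmbedding.trans (window i)) (π ∘ ρ.toEmbedding.trans (window i)) := by
  have h₁₃₂ := factorial_mul_sum_card_consecutiveOcc lam (swap 1 2)
  have h₂₁₃ := factorial_mul_sum_card_consecutiveOcc lam (swap 0 1)
  rw [sum_card_consecutiveOcc_213_eq_132] at h₂₁₃
  calc
    _ = 3 * ∑ π ∈ conjClass (m + 2) lam, ∑ i : Fin m,
          (#(sortingRelabelings (swap 1 2) (window i) (π ∘ window i)) +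
            #(sortingRelabelings (swap 0 1) (window i) (π ∘ window i)) : ℤ) := by
      zify at h₁₃₂ h₂₁₃
      simp only [sum_add_distrib]
      rw [← h₁₃₂, ← h₂₁₃, show Nat.factorial (2 + 1) = 6 from rfl]
      push_cast
      ring
    _ = ∑ π ∈ conjClass (m + 2) lam, ∑ i : Fin m,
          (6 + ∑ ρ : Perm (Fin 3), motifWeight (ρ.toEmbedding.trans (window i))
            (π ∘ ρ.toEmbedding.trans (window i))) := by
      simp only [mul_sum]
      refine sum_congr rfl fun π _ => sum_congr rfl fun i _ => ?_
      exact card_sortingRelabelings_window i (π.injective.comp (window i).injective)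
    _ = _ := by
      simp only [sum_add_distrib, sum_const, card_univ, Fintype.card_fin, nsmul_eq_mul]
      rw [sum_comm, sum_congr rfl fun i _ => sum_comm]
      ring

theorem six_mul_sum_card_consecutiveOcc (hm : m ≠ 0) (lam : (m + 2).Partition) (p q r : ℤ)
    (hp : p = lam.parts.count 1) (hq : q = lam.parts.count 2) (hr : r = lam.parts.count 3) :
    6 * ((m + 2) * (m + 1)) *
        ((∑ π ∈ conjClass (m + 2) lam, #(consecutiveOcc (swap 1 2) π) : ℕ) : ℤ) =
      #(conjClass (m + 2) lam) * ((m + 2) * (m + 1) * m + 3 * (p * (m + 2 - p)) -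
        3 * (m + 2 - p - 2 * q) - p * (p - 1) * (p - 2) + 3 * r) := by
  have htotal := sum_congr rfl fun i (_ : i ∈ (univ : Finset (Fin m))) =>
    sum_congr rfl fun ρ (_ : ρ ∈ (univ : Finset (Perm (Fin 3)))) =>
      sum_conjClass_motifWeight lam p q r hp hq hr (ρ.toEmbedding.trans (window i))
  simp only [← mul_sum, sum_const, card_univ, Fintype.card_fin, Fintype.card_perm,
    nsmul_eq_mul, show Nat.factorial 3 = 6 from rfl] at htotal
  simp only [Nat.cast_add, Nat.cast_ofNat] at htotal
  have hcancel : (6 * m : ℤ) ≠ 0 := by positivity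
  apply mul_left_cancel₀ hcancel
  linear_combination ((m + 2) * (m + 1) * m : ℤ) * thirtySix_mul_sum_card_consecutiveOcc lam +
    htotal

theorem card_consecutive_triples (Q : Fin (m + 2) → Fin (m + 2) → Fin (m + 2) → Prop)
    [∀ x y z, Decidable (Q x y z)] :
    #{x : Fin (m + 2) × Fin (m + 2) × Fin (m + 2) |
        (x.1 : ℕ) + 1 = x.2.1 ∧ (x.2.1 : ℕ) + 1 = x.2.2 ∧ Q x.1 x.2.1 x.2.2} =
      #{i : Fin m | Q (window i 0) (window i 1) (window i 2)} := by
  symm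
  refine card_bij (fun i _ => (window i 0, window i 1, window i 2)) ?_ ?_ ?_
  · intro i hi
    simpa using hi
  · intro i _ i' _ h
    simpa [Fin.ext_iff] using h
  · rintro ⟨x, y, z⟩ hxyz
    simp only [mem_filter_univ] at hxyz
    obtain ⟨hxy, hyz, hQ⟩ := hxyz
    let i : Fin m := ⟨x, by omega⟩
    have hx : window (k := 2) i 0 = x := rfl
    have hy : window (k := 2) i 1 = y := Fin.ext hxy
    have hz : window (k := 2) i 2 = z := Fin.ext (by rw [← hyz, ← hxy]; rfl)
    exact ⟨i, by simpa [hx, hy, hz] using hQ, by rw [hx, hy, hz]⟩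

theorem card_triples_132_eq_card_consecutiveOcc (π : Perm (Fin (m + 2))) :
    #{x : Fin (m + 2) × Fin (m + 2) × Fin (m + 2) | (x.1 : ℕ) + 1 = x.2.1 ∧
        (x.2.1 : ℕ) + 1 = x.2.2 ∧ π x.1 < π x.2.2 ∧ π x.2.2 < π x.2.1} =
      #(consecutiveOcc (swap 1 2) π) := by
  rw [card_consecutive_triples fun x y z => π x < π z ∧ π z < π y]
  simp [consecutiveOcc, strictMono_three_iff, swap_apply_of_ne_of_ne]

theorem card_triples_213_eq_card_consecutiveOcc (π : Perm (Fin (m + 2))) :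
    #{x : Fin (m + 2) × Fin (m + 2) × Fin (m + 2) | (x.1 : ℕ) + 1 = x.2.1 ∧
        (x.2.1 : ℕ) + 1 = x.2.2 ∧ π x.2.1 < π x.1 ∧ π x.1 < π x.2.2} =
      #(consecutiveOcc (swap 0 1) π) := by
  rw [card_consecutive_triples fun x y z => π y < π x ∧ π x < π z]
  simp [consecutiveOcc, strictMono_three_iff, swap_apply_of_ne_of_ne]

end PatternSums

theorem stmt13 (n : ℕ) (hn : 3 ≤ n) (lam : n.Partition)
    (p q r X₁ X₂ X₃ X₄ : ℚ)
    (hp : p = (lam.parts.count 1 : ℚ)) (hq : q = (lam.parts.count 2 : ℚ))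
    (hr : r = (lam.parts.count 3 : ℚ))
    (hX1 : X₁ = p - 1) (hX2 : X₂ = (p - 1) * (p - 2) / 2 + q - 1)
    (hX3 : X₃ = (p - 1) * (p - 2) / 2 - q)
    (hX4 : X₄ = (p - 1) * (p - 2) * (p - 3) / 3 - p - r + 2) :
    ((∑ π ∈ conjClass n lam,
      ((((Finset.univ : Finset (Fin n × Fin n × Fin n)).filter fun x =>
          (x.1 : ℕ) + 1 = (x.2.1 : ℕ) ∧ (x.2.1 : ℕ) + 1 = (x.2.2 : ℕ) ∧ π x.1 < π x.2.2 ∧ π x.2.2 < π x.2.1).card : ℚ)))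
      = ((conjClass n lam).card : ℚ) *
        (((n : ℚ) - 2) / 6 + ((n : ℚ) - 3) * X₁ / (2 * (n : ℚ) * ((n : ℚ) - 1))
          - X₂ / (2 * (n : ℚ) * ((n : ℚ) - 1)) - 3 * X₃ / (2 * (n : ℚ) * ((n : ℚ) - 1))
          - X₄ / (2 * (n : ℚ) * ((n : ℚ) - 1)))) ∧
    ((∑ π ∈ conjClass n lam,
      ((((Finset.univ : Finset (Fin n × Fin n × Fin n)).filter fun x =>
          (x.1 : ℕ) + 1 = (x.2.1 : ℕ) ∧ (x.2.1 : ℕ) + 1 = (x.2.2 : ℕ) ∧ π x.2.1 < π x.1 ∧ π x.1 < π x.2.2).card : ℚ)))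
      = ((conjClass n lam).card : ℚ) *
        (((n : ℚ) - 2) / 6 + ((n : ℚ) - 3) * X₁ / (2 * (n : ℚ) * ((n : ℚ) - 1))
          - X₂ / (2 * (n : ℚ) * ((n : ℚ) - 1)) - 3 * X₃ / (2 * (n : ℚ) * ((n : ℚ) - 1))
          - X₄ / (2 * (n : ℚ) * ((n : ℚ) - 1)))) := by
  obtain ⟨m, rfl⟩ : ∃ m, n = m + 2 := ⟨n - 2, by omega⟩
  have hsum := congrArg (Int.cast : ℤ → ℚ)
    (six_mul_sum_card_consecutiveOcc (by omega) lam _ _ _ rfl rfl rfl)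
  simp only [card_triples_132_eq_card_consecutiveOcc, card_triples_213_eq_card_consecutiveOcc,
    ← Nat.cast_sum, sum_card_consecutiveOcc_213_eq_132, and_self]
  have hm₁ : (m + 2 - 1 : ℚ) ≠ 0 := by
    rw [add_sub_assoc]
    positivity
  push_cast at hsum ⊢
  rw [← hp, ← hq, ← hr] at hsum
  rw [hX1, hX2, hX3, hX4]
  field_simp
  linear_combination 12 * hsum
end

section
/- Let n ≥ 3 and let λ be a partition of n. Then Σ_{π ∈ C_λ} occ₍₁₂₋₃₎(π) = |C_λ| · ( C(n−1,2)/6 + (n²+3n−6)·X₁/(12n) + (n+2)·X₂/(12n) + (5n−6)·X₃/(12n) + X₄/(4n) ), where occ₍₁₂₋₃₎(π) = #{(i,k) : 1 ≤ i, i+1 < k ≤ n, π(i) < π(i+1) < π(k)} is the number of occurrences of the vincular pattern (12-3) in π. -/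
open Equiv Finset

/-!
Averaging over the class is averaging over conjugates: for a fixed `π`, sum `occ (σ π σ⁻¹)` over all
labelings `σ`. An occurrence is then a triple `a, b, c` of points with `σ b = σ a + 1`, `σ b < σ c`
and `σ (π a) < σ (π b) < σ (π c)`. Gluing `b` to `a` turns the labelings with `σ b = σ a + 1` into
all labelings of the remaining points, and each inequality `σ u < σ v` has indicator
`(1 + s) / 2`, where the sign `s = ±1` of the pair `(u, v)` becomes the sign of the glued pair, or
a constant if `{u, v} = {a, b}`. Reversing the labels kills products of an odd number of signs, and
the mean of a product of two signs only depends on the coincidences between the two pairs. So each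
triple contributes a polynomial in the indicators of the equalities between `π a, π b, π c` and
`a, b, c`. Summed over all triples, every monomial counts partial cycles of `π`, which is
expressed through the numbers of fixed points of `π`, `π ^ 2` and `π ^ 3`.
-/

section OrderSign

variable {L : Type*} [LinearOrder L] {i j k : L}

/-- The sign of the comparison of `i` with `j`: `1`, `-1` or `0` as `i < j`, `j < i` or `i = j`. -/
def orderSign (i j : L) : ℚ := if i < j then 1 else if j < i then -1 else 0

lemma orderSign_of_lt (h : i < j) : orderSign i j = 1 := if_pos h

lemma orderSign_self (i : L) : orderSign i i = 0 := by simp [orderSign]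

lemma orderSign_swap (i j : L) : orderSign j i = -orderSign i j := by
  rcases lt_trichotomy i j with h | rfl | h <;> simp [orderSign, *, not_lt_of_gt]

lemma orderSign_rev {n : ℕ} (i j : Fin n) : orderSign i.rev j.rev = -orderSign i j := by
  rw [← orderSign_swap]
  simp only [orderSign, Fin.rev_lt_rev]

lemma orderSign_apply_of_strictMono {M : Type*} [LinearOrder M] {f : L → M} (hf : StrictMono f) :
    orderSign (f i) (f j) = orderSign i j := by
  simp only [orderSign, hf.lt_iff_lt]

lemma ite_lt_eq_orderSign (h : i ≠ j) : (if i < j then 1 else 0) = (1 + orderSign i j) / 2 := by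
  rcases h.lt_or_gt with h | h <;> simp [orderSign, h, h.not_gt]

lemma orderSign_mul_self (h : i ≠ j) : orderSign i j * orderSign i j = 1 := by
  rcases h.lt_or_gt with h | h <;> simp [orderSign, h, h.not_gt]

-- The least and the greatest of the three points contribute `1` each, the middle one `-1`.
lemma orderSign_mul_add_of_ne (hij : i ≠ j) (hik : i ≠ k) (hjk : j ≠ k) :
    orderSign i j * orderSign i k + orderSign j i * orderSign j k
      + orderSign k i * orderSign k j = 1 := by
  rcases hij.lt_or_gt with h₁ | h₁ <;> rcases hik.lt_or_gt with h₂ | h₂ <;>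
    rcases hjk.lt_or_gt with h₃ | h₃ <;>
    first
    | order
    | simp [orderSign, h₁, h₂, h₃, h₁.not_gt, h₂.not_gt, h₃.not_gt]

end OrderSign

section Kronecker

variable {α : Type*} [DecidableEq α]

/-- The Kronecker delta with rational values. -/
def kron (u v : α) : ℚ := if u = v then 1 else 0

lemma kron_self (u : α) : kron u u = 1 := if_pos rfl

lemma kron_comm (u v : α) : kron u v = kron v u := by simp only [kron, eq_comm]

lemma kron_of_ne {u v : α} (h : u ≠ v) : kron u v = 0 := if_neg h

lemma kron_mul_self (u v : α) : kron u v * kron u v = kron u v := by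
  simp [kron]

lemma kron_apply_mul_kron_apply_apply (π : Perm α) (x : α) :
    kron (π x) x * kron (π (π x)) x = kron (π x) x := by
  by_cases h : π x = x <;> simp [kron, h]

lemma kron_apply_apply (π : Perm α) (u v : α) : kron (π u) (π v) = kron u v := by
  simp [kron]

/-- Three times the correlation of the signs of the pairs `(u, v)` and `(w, t)` under a uniformly
random labeling by a linear order (`sum_orderSign_mul_orderSign`): `3` for equal pairs of distinct
points, `1` for pairs sharing only their first or only their second point, antisymmetric in each
pair. -/
def signCorr (u v w t : α) : ℚ :=
  kron u w - kron u t - kron v w + kron v t + kron u w * kron v t - kron u t * kron v w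

lemma signCorr_self_left (u w t : α) : signCorr u u w t = 0 := by
  simp only [signCorr]
  ring

lemma signCorr_self_right (u v w : α) : signCorr u v w w = 0 := by
  simp only [signCorr]
  ring

end Kronecker

section Labelings

variable {β : Type*} [Fintype β] [DecidableEq β] {N : ℕ}

lemma sum_labelings_relabel {M : Type*} [AddCommMonoid M] (e : Perm β) (g : (β ≃ Fin N) → M) :
    ∑ τ : β ≃ Fin N, g (e.trans τ) = ∑ τ, g τ :=
  (e.equivCongr (Equiv.refl _)).symm.sum_comp g

lemma sum_labelings_rev {M : Type*} [AddCommMonoid M] (g : (β ≃ Fin N) → M) :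
    ∑ τ : β ≃ Fin N, g (τ.trans Fin.revPerm) = ∑ τ, g τ :=
  ((Equiv.refl β).equivCongr Fin.revPerm).sum_comp g

lemma sum_labelings_eq_zero_of_odd {g : (β ≃ Fin N) → ℚ}
    (hg : ∀ τ, g (τ.trans Fin.revPerm) = -g τ) : ∑ τ, g τ = 0 := by
  have h := sum_labelings_rev g
  simp only [hg, sum_neg_distrib] at h
  linarith

lemma sum_orderSign_mul_of_disjoint {u v w t : β} (huw : u ≠ w) (hut : u ≠ t) (hvw : v ≠ w)
    (hvt : v ≠ t) :
    ∑ τ : β ≃ Fin N, orderSign (τ u) (τ v) * orderSign (τ w) (τ t) = 0 := by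
  have h := sum_labelings_relabel (swap u v)
    (fun τ : β ≃ Fin N => orderSign (τ u) (τ v) * orderSign (τ w) (τ t))
  simp only [trans_apply, swap_apply_left, swap_apply_right,
    swap_apply_of_ne_of_ne huw.symm hvw.symm, swap_apply_of_ne_of_ne hut.symm hvt.symm,
    fun τ : β ≃ Fin N => orderSign_swap (τ u) (τ v), neg_mul, sum_neg_distrib] at h
  linarith

lemma sum_orderSign_mul_self {u v : β} (h : u ≠ v) :
    ∑ τ : β ≃ Fin N, orderSign (τ u) (τ v) * orderSign (τ u) (τ v) =
      Fintype.card (β ≃ Fin N) := by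
  simp [fun τ : β ≃ Fin N => orderSign_mul_self (τ.injective.ne h)]

lemma sum_orderSign_mul_of_shared {u v t : β} (huv : u ≠ v) (hut : u ≠ t) (hvt : v ≠ t) :
    ∑ τ : β ≃ Fin N, orderSign (τ u) (τ v) * orderSign (τ u) (τ t) =
      Fintype.card (β ≃ Fin N) / 3 := by
  have h_v : ∑ τ : β ≃ Fin N, orderSign (τ v) (τ u) * orderSign (τ v) (τ t) =
      ∑ τ : β ≃ Fin N, orderSign (τ u) (τ v) * orderSign (τ u) (τ t) := by
    rw [← sum_labelings_relabel (swap u v)]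
    simp [swap_apply_of_ne_of_ne hut.symm hvt.symm]
  have h_t : ∑ τ : β ≃ Fin N, orderSign (τ t) (τ u) * orderSign (τ t) (τ v) =
      ∑ τ : β ≃ Fin N, orderSign (τ u) (τ v) * orderSign (τ u) (τ t) := by
    rw [← sum_labelings_relabel (swap u t)]
    simp [swap_apply_of_ne_of_ne huv.symm hvt, mul_comm]
  have h_total : ∑ τ : β ≃ Fin N, (orderSign (τ u) (τ v) * orderSign (τ u) (τ t)
      + orderSign (τ v) (τ u) * orderSign (τ v) (τ t)
      + orderSign (τ t) (τ u) * orderSign (τ t) (τ v)) = Fintype.card (β ≃ Fin N) := by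
    simp [fun τ : β ≃ Fin N => orderSign_mul_add_of_ne (τ.injective.ne huv) (τ.injective.ne hut)
      (τ.injective.ne hvt)]
  rw [sum_add_distrib, sum_add_distrib, h_v, h_t] at h_total
  linarith

lemma sum_orderSign_mul_orderSign (u v w t : β) :
    ∑ τ : β ≃ Fin N, orderSign (τ u) (τ v) * orderSign (τ w) (τ t) =
      Fintype.card (β ≃ Fin N) / 3 * signCorr u v w t := by
  rcases eq_or_ne u v with rfl | huv
  · simp [orderSign_self, signCorr_self_left]
  rcases eq_or_ne w t with rfl | hwt
  · simp [orderSign_self, signCorr_self_right]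
  rcases eq_or_ne u w with rfl | huw
  · rcases eq_or_ne v t with rfl | hvt
    · rw [sum_orderSign_mul_self huv]
      norm_num [signCorr, kron, huv, huv.symm]
    · rw [sum_orderSign_mul_of_shared huv hwt hvt]
      simp [signCorr, kron, huv.symm, hwt, hvt]
  rcases eq_or_ne v t with rfl | hvt
  · simp only [fun τ : β ≃ Fin N => orderSign_swap (τ v), neg_mul_neg]
    rw [sum_orderSign_mul_of_shared huv.symm hwt.symm huw]
    simp [signCorr, kron, huv, hwt.symm, huw]
  rcases eq_or_ne u t with rfl | hut
  · simp only [fun τ : β ≃ Fin N => orderSign_swap (τ u) (τ w), mul_neg, sum_neg_distrib]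
    rcases eq_or_ne v w with rfl | hvw
    · rw [sum_orderSign_mul_self huv]
      norm_num [signCorr, kron, huv, huv.symm]
    · rw [sum_orderSign_mul_of_shared huv hwt.symm hvw]
      simp [signCorr, kron, huv.symm, huw, hvw]
  rcases eq_or_ne v w with rfl | hvw
  · simp only [fun τ : β ≃ Fin N => orderSign_swap (τ v) (τ u), neg_mul, sum_neg_distrib]
    rw [sum_orderSign_mul_of_shared huv.symm hwt hut]
    simp [signCorr, kron, huv, hut, hwt]
  · rw [sum_orderSign_mul_of_disjoint huw hut hvw hvt]
    simp [signCorr, kron, huw, hut, hvw, hvt]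

lemma sum_prod_const_add_orderSign (k₁ k₂ k₃ : ℚ) (u₁ v₁ u₂ v₂ u₃ v₃ : β) :
    ∑ τ : β ≃ Fin N, (k₁ + orderSign (τ u₁) (τ v₁)) * (k₂ + orderSign (τ u₂) (τ v₂))
        * (k₃ + orderSign (τ u₃) (τ v₃)) =
      Fintype.card (β ≃ Fin N) * (k₁ * k₂ * k₃ + (k₁ * signCorr u₂ v₂ u₃ v₃
        + k₂ * signCorr u₁ v₁ u₃ v₃ + k₃ * signCorr u₁ v₁ u₂ v₂) / 3) := by
  let s₁ (τ : β ≃ Fin N) := orderSign (τ u₁) (τ v₁)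
  let s₂ (τ : β ≃ Fin N) := orderSign (τ u₂) (τ v₂)
  let s₃ (τ : β ≃ Fin N) := orderSign (τ u₃) (τ v₃)
  have h_odd : ∑ τ, (k₂ * k₃ * s₁ τ + k₁ * k₃ * s₂ τ + k₁ * k₂ * s₃ τ
      + s₁ τ * s₂ τ * s₃ τ) = 0 := by
    refine sum_labelings_eq_zero_of_odd fun τ => ?_
    simp only [s₁, s₂, s₃, trans_apply, Fin.revPerm_apply, orderSign_rev]
    ring
  calc
    _ = ∑ τ, (k₁ * k₂ * k₃ + k₁ * (s₂ τ * s₃ τ) + k₂ * (s₁ τ * s₃ τ) + k₃ * (s₁ τ * s₂ τ)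
        + (k₂ * k₃ * s₁ τ + k₁ * k₃ * s₂ τ + k₁ * k₂ * s₃ τ + s₁ τ * s₂ τ * s₃ τ)) :=
      sum_congr rfl fun τ _ => by ring
    _ = _ := by
      rw [sum_add_distrib, h_odd]
      simp only [s₁, s₂, s₃, sum_add_distrib, ← mul_sum, sum_orderSign_mul_orderSign, sum_const,
        card_univ, nsmul_eq_mul]
      ring

end Labelings

section Gluing

variable {α : Type*} [DecidableEq α] {N : ℕ} {a b u v : α}

/-- The labeling extending `τ` that gives `b` the label `p`, moving up the labels from `p` on. -/
def insertLabel (b : α) (p : Fin (N + 1)) (τ : {v // v ≠ b} ≃ Fin N) : α ≃ Fin (N + 1) :=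
  (optionSubtypeNe b).symm.trans ((optionCongr τ).trans (finSuccEquiv' p).symm)

lemma insertLabel_self (p : Fin (N + 1)) (τ : {v // v ≠ b} ≃ Fin N) : insertLabel b p τ b = p := by
  simp [insertLabel]

lemma insertLabel_of_ne (h : v ≠ b) (p : Fin (N + 1)) (τ : {v // v ≠ b} ≃ Fin N) :
    insertLabel b p τ v = p.succAbove (τ ⟨v, h⟩) := by
  simp [insertLabel, h]

lemma insertLabel_bijective (b : α) :
    Function.Bijective fun x : ({v // v ≠ b} ≃ Fin N) × Fin (N + 1) => insertLabel b x.2 x.1 := by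
  constructor
  · rintro ⟨τ, p⟩ ⟨τ', p'⟩ h
    have hp : p = p' := by simpa [insertLabel_self] using DFunLike.congr_fun h b
    subst hp
    have hτ : τ = τ' := by
      ext1 ⟨v, hv⟩
      simpa [insertLabel_of_ne hv] using DFunLike.congr_fun h v
    rw [hτ]
  · intro σ
    refine ⟨((σ.subtypeEquiv (q := (· ≠ σ b)) fun v => σ.injective.ne_iff.symm).trans
      (finSuccAboveEquiv (σ b)).symm, σ b), ?_⟩
    ext1 v
    rcases eq_or_ne v b with rfl | hv
    · exact insertLabel_self _ _
    · rw [insertLabel_of_ne hv]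
      exact congrArg Subtype.val
        ((finSuccAboveEquiv (σ b)).apply_symm_apply ⟨σ v, σ.injective.ne hv⟩)

lemma val_succAbove_add_one_eq_iff {p : Fin (N + 1)} {i : Fin N} :
    (p.succAbove i : ℕ) + 1 = p ↔ p = i.succ := by
  rcases Fin.castSucc_lt_or_lt_succ p i with h | h
  · simp [Fin.succAbove_of_castSucc_lt _ _ h, Fin.ext_iff, eq_comm]
  · rw [Fin.succAbove_of_lt_succ _ _ h]
    simp only [Fin.ext_iff, Fin.lt_def, Fin.val_succ] at h ⊢
    omega

/-- The labeling extending `τ` in which `b` comes right after `a`. -/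
def glueLabel (h : a ≠ b) (τ : {v // v ≠ b} ≃ Fin N) : α ≃ Fin (N + 1) :=
  insertLabel b (τ ⟨a, h⟩).succ τ

lemma sum_labelings_adjacent [Fintype α] {M : Type*} [AddCommMonoid M] (h : a ≠ b)
    (g : (α ≃ Fin (N + 1)) → M) :
    (∑ σ : α ≃ Fin (N + 1), if (σ a : ℕ) + 1 = σ b then g σ else 0) =
      ∑ τ, g (glueLabel h τ) := by
  rw [← (insertLabel_bijective b).sum_comp, Fintype.sum_prod_type]
  simp [insertLabel_self, insertLabel_of_ne h, val_succAbove_add_one_eq_iff, glueLabel]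

/-- The projection identifying `b` with `a`. -/
def glue (h : a ≠ b) (u : α) : {v // v ≠ b} := if hu : u = b then ⟨a, h⟩ else ⟨u, hu⟩

/-- The sign of the pair `(u, v)` if `{u, v} = {a, b}` and `b` comes right after `a`; `0` for any
other pair of distinct points. -/
def glueSign (a b u v : α) : ℚ := kron u a * kron v b - kron u b * kron v a

lemma glue_self (h : a ≠ b) : glue h b = ⟨a, h⟩ := dif_pos rfl

lemma glue_of_ne (h : a ≠ b) (hu : u ≠ b) : glue h u = ⟨u, hu⟩ := dif_neg hu

lemma glueSign_swap (a b u v : α) : glueSign a b v u = -glueSign a b u v := by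
  simp only [glueSign]
  ring

lemma orderSign_succAbove_succ (p i : Fin N) :
    orderSign (p.succ.succAbove i) p.succ = orderSign i p + kron i p := by
  rcases lt_trichotomy i p with h | rfl | h
  · rw [orderSign_of_lt h, orderSign_of_lt, kron_of_ne h.ne, add_zero]
    exact Fin.succAbove_lt_iff_castSucc_lt _ _ |>.2 (Fin.castSucc_lt_succ_iff.2 h.le)
  · rw [orderSign_self, kron_self, zero_add, orderSign_of_lt]
    exact Fin.succAbove_lt_iff_castSucc_lt _ _ |>.2 (Fin.castSucc_lt_succ_iff.2 le_rfl)
  · rw [orderSign_swap, orderSign_swap p, orderSign_of_lt h, orderSign_of_lt, kron_of_ne h.ne',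
      add_zero]
    exact Fin.lt_succAbove_iff_lt_castSucc _ _ |>.2 (Fin.succ_lt_succ_iff.2 h)

lemma orderSign_glueLabel_of_ne (h : a ≠ b) (τ : {v // v ≠ b} ≃ Fin N) (hu : u ≠ b) :
    orderSign (glueLabel h τ u) (glueLabel h τ b) =
      orderSign (τ (glue h u)) (τ (glue h b)) + glueSign a b u b := by
  rw [glueLabel, insertLabel_self, insertLabel_of_ne hu, orderSign_succAbove_succ, glue_self,
    glue_of_ne h hu]
  simp [glueSign, kron, hu]

lemma orderSign_glueLabel (h : a ≠ b) (τ : {v // v ≠ b} ≃ Fin N) (u v : α) :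
    orderSign (glueLabel h τ u) (glueLabel h τ v) =
      orderSign (τ (glue h u)) (τ (glue h v)) + glueSign a b u v := by
  rcases eq_or_ne u b with rfl | hu
  · rcases eq_or_ne v u with rfl | hv
    · simp [orderSign_self, glueSign, mul_comm]
    · rw [orderSign_swap (glueLabel h τ v), orderSign_glueLabel_of_ne h τ hv,
        orderSign_swap (τ (glue h v)), glueSign_swap]
      ring
  · rcases eq_or_ne v b with rfl | hv
    · exact orderSign_glueLabel_of_ne h τ hu
    · rw [glueLabel, insertLabel_of_ne hu, insertLabel_of_ne hv, glue_of_ne h hu, glue_of_ne h hv,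
        orderSign_apply_of_strictMono (Fin.strictMono_succAbove _)]
      simp [glueSign, kron, hu, hv]

lemma kron_glue (h : a ≠ b) (u v : α) :
    kron (glue h u) (glue h v) = kron u v + kron u a * kron v b + kron u b * kron v a := by
  by_cases hu : u = b <;> by_cases hv : v = b
  · simp [hu, hv, kron, h.symm]
  · simp [hu, glue_self, glue_of_ne h hv, kron, hv, Ne.symm hv, eq_comm]
  · simp [hv, glue_self, glue_of_ne h hu, kron, hu]
  · simp [glue_of_ne h hu, glue_of_ne h hv, kron, hu, hv]

/-- `24` times the proportion of labelings with `b < c` and `x < y < z` among those in which `b`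
comes right after `a` (`sum_adjacent_pattern_eq_glueWeight`). -/
def glueWeight (h : a ≠ b) (c x y z : α) : ℚ :=
  3 * ((1 + glueSign a b x y) * (1 + glueSign a b y z))
    + signCorr (glue h x) (glue h y) (glue h y) (glue h z)
    + (1 + glueSign a b x y) * signCorr (glue h b) (glue h c) (glue h y) (glue h z)
    + (1 + glueSign a b y z) * signCorr (glue h b) (glue h c) (glue h x) (glue h y)

lemma sum_adjacent_pattern_eq_glueWeight [Fintype α] (h : a ≠ b) {c x y z : α} (hac : a ≠ c)
    (hbc : b ≠ c) (hxy : x ≠ y) (hyz : y ≠ z) :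
    (∑ σ : α ≃ Fin (N + 1),
      if (σ a : ℕ) + 1 = σ b ∧ σ b < σ c ∧ σ x < σ y ∧ σ y < σ z then 1 else 0) =
      (Fintype.card ({v // v ≠ b} ≃ Fin N) : ℚ) / 24 * glueWeight h c x y z := by
  have h_indicator (σ : α ≃ Fin (N + 1)) :
      (if σ b < σ c ∧ σ x < σ y ∧ σ y < σ z then (1 : ℚ) else 0) =
        (1 + orderSign (σ b) (σ c)) * (1 + orderSign (σ x) (σ y))
          * (1 + orderSign (σ y) (σ z)) / 8 := by
    have h_mul : (if σ b < σ c ∧ σ x < σ y ∧ σ y < σ z then (1 : ℚ) else 0) =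
        (if σ b < σ c then 1 else 0) * ((if σ x < σ y then 1 else 0)
          * (if σ y < σ z then 1 else 0)) := by
      simp only [ite_zero_mul_ite_zero, one_mul]
    rw [h_mul, ite_lt_eq_orderSign (σ.injective.ne hbc), ite_lt_eq_orderSign (σ.injective.ne hxy),
      ite_lt_eq_orderSign (σ.injective.ne hyz)]
    ring
  have h_sign : glueSign a b b c = 0 := by simp [glueSign, kron, h.symm, hac.symm, hbc.symm]
  simp only [ite_and (_ + 1 = _), sum_labelings_adjacent h, h_indicator, orderSign_glueLabel,
    h_sign, add_zero, ← sum_div]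
  simp only [add_comm (orderSign _ _), ← add_assoc, sum_prod_const_add_orderSign, glueWeight]
  ring

end Gluing

section Embeddings

variable {α : Type*} [Fintype α]

lemma sum_embedding_eq_sum_distinct [DecidableEq α] {M : Type*} [AddCommMonoid M]
    (g : α → α → α → M) :
    ∑ v : Fin 3 ↪ α, g (v 0) (v 1) (v 2) =
      ∑ a, ∑ b, ∑ c, if a ≠ b ∧ a ≠ c ∧ b ≠ c then g a b c else 0 := by
  simp_rw [← Fintype.sum_prod_type', ← sum_filter]
  refine sum_bij (fun v _ => (v 0, v 1, v 2)) ?_ ?_ ?_ (fun _ _ => rfl)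
  · intro v _
    simp
  · intro v _ w _ h
    simp only [Prod.mk.injEq] at h
    ext l
    fin_cases l <;> simp [h]
  · rintro ⟨a, b, c⟩ h
    simp only [mem_filter, mem_univ, true_and] at h
    have h_inj : Function.Injective ![a, b, c] := by
      intro l m
      fin_cases l <;> fin_cases m <;> simp [h, h.1.symm, h.2.1.symm, h.2.2.symm]
    exact ⟨⟨![a, b, c], h_inj⟩, mem_univ _, rfl⟩

-- Expands `(1 - [a = b]) * (1 - [a = c]) * (1 - [b = c])`.
lemma sum_embedding_eq_inclusion_exclusion (g : α → α → α → ℚ) :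
    ∑ v : Fin 3 ↪ α, g (v 0) (v 1) (v 2) =
      ∑ a, ∑ b, ∑ c, g a b c - ∑ a, ∑ c, g a a c - ∑ a, ∑ b, g a b a - ∑ a, ∑ b, g a b b
        + 2 * ∑ a, g a a a := by
  classical
  have h_incl_excl (a b c : α) : (if a ≠ b ∧ a ≠ c ∧ b ≠ c then g a b c else 0) =
      g a b c - (if a = b then g a b c else 0) - (if a = c then g a b c else 0)
        - (if b = c then g a b c else 0)
        + 2 * (if a = b then if a = c then g a b c else 0 else 0) := by
    by_cases hab : a = b <;> by_cases hac : a = c <;> by_cases hbc : b = c <;> grind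
  simp only [sum_embedding_eq_sum_distinct, h_incl_excl, sum_add_distrib, sum_sub_distrib,
    ← mul_sum]
  simp

lemma sum_embedding_const (q : ℚ) :
    ∑ _v : Fin 3 ↪ α, q =
      q * (Fintype.card α * (Fintype.card α - 1) * (Fintype.card α - 2)) := by
  rw [sum_embedding_eq_inclusion_exclusion fun _ _ _ => q]
  simp only [sum_const, card_univ, nsmul_eq_mul]
  ring

lemma sum_embedding_permute {M : Type*} [AddCommMonoid M] {i j k : Fin 3} (hij : i ≠ j)
    (hik : i ≠ k) (hjk : j ≠ k) (g : α → α → α → M) :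
    ∑ v : Fin 3 ↪ α, g (v i) (v j) (v k) = ∑ v : Fin 3 ↪ α, g (v 0) (v 1) (v 2) := by
  obtain ⟨e, rfl, rfl, rfl⟩ : ∃ e : Perm (Fin 3), e 0 = i ∧ e 1 = j ∧ e 2 = k := by
    revert i j k
    decide
  exact (embeddingCongr e.symm (Equiv.refl α)).sum_comp fun v => g (v 0) (v 1) (v 2)

end Embeddings

section Monomials

variable {α : Type*} [Fintype α] [DecidableEq α] {i j k : Fin 3}

/-- The number of points whose cycle length divides `k`, as a rational number. -/
def fixedCount (π : Perm α) (k : ℕ) : ℚ := #{x | (π ^ k) x = x}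

variable (π : Perm α)

lemma sum_kron_apply_self : ∑ x, kron (π x) x = fixedCount π 1 := by
  simp [kron, fixedCount]

lemma sum_kron_apply_apply_self : ∑ x, kron (π (π x)) x = fixedCount π 2 := by
  simp [kron, fixedCount, pow_succ]

lemma sum_kron_apply_apply_apply_self : ∑ x, kron (π (π (π x))) x = fixedCount π 3 := by
  simp [kron, fixedCount, pow_succ]

lemma sum_kron (u : α) : ∑ v, kron u v = 1 := by
  simp [kron]

lemma sum_kron_mul (u : α) (g : α → ℚ) : ∑ v, kron u v * g v = g u := by
  simp [kron]

lemma sum_kron_apply (v : α) : ∑ u, kron (π u) v = 1 := by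
  simp [kron, ← Perm.eq_inv_iff_eq]

lemma exists_third_index (hij : i ≠ j) : ∃ k, i ≠ k ∧ j ≠ k := by
  revert i j
  decide

lemma sum_embedding_fixed (i : Fin 3) :
    ∑ v : Fin 3 ↪ α, kron (π (v i)) (v i) =
      fixedCount π 1 * (Fintype.card α - 1) * (Fintype.card α - 2) := by
  obtain ⟨j, hji⟩ := exists_ne i
  have hij := hji.symm
  obtain ⟨k, hik, hjk⟩ := exists_third_index hij
  rw [sum_embedding_permute hij hik hjk fun a _ _ => kron (π a) a,
    sum_embedding_eq_inclusion_exclusion fun a _ _ => kron (π a) a]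
  simp only [sum_const, card_univ, nsmul_eq_mul, ← mul_sum, sum_kron_apply_self]
  ring

lemma sum_embedding_edge (hij : i ≠ j) :
    ∑ v : Fin 3 ↪ α, kron (π (v i)) (v j) =
      (Fintype.card α - fixedCount π 1) * (Fintype.card α - 2) := by
  obtain ⟨k, hik, hjk⟩ := exists_third_index hij
  rw [sum_embedding_permute hij hik hjk fun a b _ => kron (π a) b,
    sum_embedding_eq_inclusion_exclusion fun a b _ => kron (π a) b]
  simp only [sum_const, card_univ, nsmul_eq_mul, ← mul_sum, sum_kron_apply_self, sum_kron]
  ring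

lemma sum_embedding_fixed_fixed (hij : i ≠ j) :
    ∑ v : Fin 3 ↪ α, kron (π (v i)) (v i) * kron (π (v j)) (v j) =
      fixedCount π 1 * (fixedCount π 1 - 1) * (Fintype.card α - 2) := by
  obtain ⟨k, hik, hjk⟩ := exists_third_index hij
  rw [sum_embedding_permute hij hik hjk fun a b _ => kron (π a) a * kron (π b) b,
    sum_embedding_eq_inclusion_exclusion fun a b _ => kron (π a) a * kron (π b) b]
  simp only [sum_const, card_univ, nsmul_eq_mul, ← mul_sum, ← sum_mul, kron_mul_self,
    sum_kron_apply_self]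
  ring

lemma sum_embedding_swap (hij : i ≠ j) :
    ∑ v : Fin 3 ↪ α, kron (π (v i)) (v j) * kron (π (v j)) (v i) =
      (fixedCount π 2 - fixedCount π 1) * (Fintype.card α - 2) := by
  obtain ⟨k, hik, hjk⟩ := exists_third_index hij
  rw [sum_embedding_permute hij hik hjk fun a b _ => kron (π a) b * kron (π b) a,
    sum_embedding_eq_inclusion_exclusion fun a b _ => kron (π a) b * kron (π b) a]
  simp only [sum_const, card_univ, nsmul_eq_mul, ← mul_sum, kron_mul_self, sum_kron_mul,
    sum_kron_apply_self, sum_kron_apply_apply_self]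
  ring

lemma sum_embedding_fixed_edge (hij : i ≠ j) (hik : i ≠ k) (hjk : j ≠ k) :
    ∑ v : Fin 3 ↪ α, kron (π (v i)) (v i) * kron (π (v j)) (v k) =
      fixedCount π 1 * (Fintype.card α - fixedCount π 1) := by
  rw [sum_embedding_permute hij hik hjk fun a b c => kron (π a) a * kron (π b) c,
    sum_embedding_eq_inclusion_exclusion fun a b c => kron (π a) a * kron (π b) c]
  simp only [sum_const, card_univ, nsmul_eq_mul, ← mul_sum, ← sum_mul, kron_mul_self, sum_kron,
    sum_kron_apply, sum_kron_apply_self]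
  ring

lemma sum_embedding_path (hij : i ≠ j) (hik : i ≠ k) (hjk : j ≠ k) :
    ∑ v : Fin 3 ↪ α, kron (π (v i)) (v j) * kron (π (v j)) (v k) =
      Fintype.card α - fixedCount π 2 := by
  rw [sum_embedding_permute hij hik hjk fun a b c => kron (π a) b * kron (π b) c,
    sum_embedding_eq_inclusion_exclusion fun a b c => kron (π a) b * kron (π b) c]
  simp only [sum_const, card_univ, nsmul_eq_mul, ← mul_sum, kron_mul_self, kron_apply_apply,
    mul_one, sum_kron, sum_kron_mul, sum_kron_apply_self, sum_kron_apply_apply_self]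
  ring

lemma sum_embedding_fixed_fixed_fixed (hij : i ≠ j) (hik : i ≠ k) (hjk : j ≠ k) :
    ∑ v : Fin 3 ↪ α, kron (π (v i)) (v i) * kron (π (v j)) (v j) * kron (π (v k)) (v k) =
      fixedCount π 1 * (fixedCount π 1 - 1) * (fixedCount π 1 - 2) := by
  rw [sum_embedding_permute hij hik hjk fun a b c => kron (π a) a * kron (π b) b * kron (π c) c,
    sum_embedding_eq_inclusion_exclusion fun a b c => kron (π a) a * kron (π b) b * kron (π c) c]
  simp only [mul_assoc, mul_left_comm _ (fixedCount π 1), ← mul_sum, ← sum_mul, kron_mul_self,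
    sum_kron_apply_self]
  ring

lemma sum_embedding_swap_fixed (hij : i ≠ j) (hik : i ≠ k) (hjk : j ≠ k) :
    ∑ v : Fin 3 ↪ α, kron (π (v i)) (v j) * kron (π (v j)) (v i) * kron (π (v k)) (v k) =
      (fixedCount π 2 - fixedCount π 1) * fixedCount π 1 := by
  rw [sum_embedding_permute hij hik hjk fun a b c => kron (π a) b * kron (π b) a * kron (π c) c,
    sum_embedding_eq_inclusion_exclusion fun a b c => kron (π a) b * kron (π b) a * kron (π c) c]
  simp only [mul_assoc, ← mul_sum, ← sum_mul, kron_mul_self, kron_apply_apply, sum_kron_mul,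
    mul_comm (kron (π (π _)) _), kron_apply_mul_kron_apply_apply, sum_kron_apply_self,
    sum_kron_apply_apply_self]
  ring

lemma sum_embedding_threeCycle (hij : i ≠ j) (hik : i ≠ k) (hjk : j ≠ k) :
    ∑ v : Fin 3 ↪ α, kron (π (v i)) (v j) * kron (π (v j)) (v k) * kron (π (v k)) (v i) =
      fixedCount π 3 - fixedCount π 1 := by
  rw [sum_embedding_permute hij hik hjk fun a b c => kron (π a) b * kron (π b) c * kron (π c) a,
    sum_embedding_eq_inclusion_exclusion fun a b c => kron (π a) b * kron (π b) c * kron (π c) a]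
  simp only [mul_assoc, ← mul_sum, kron_mul_self, kron_apply_apply, sum_kron_mul,
    mul_comm (kron (π (π _)) _), kron_apply_mul_kron_apply_apply, sum_kron_apply_self,
    sum_kron_apply_apply_apply_self]
  ring

end Monomials

section GlueWeight

variable {α : Type*} [DecidableEq α] {a b c x y z : α}

-- A nonzero `glueSign a b x y` forces `{x, y} = {a, b}`.
lemma glueSign_mul_glueSign_eq_zero (hxz : x ≠ z) :
    glueSign a b x y * glueSign a b y z = 0 := by
  simp only [glueSign, kron]
  grind

lemma kron_glue_mul_kron_glue_eq_zero (h : a ≠ b) (hxy : x ≠ y) (hxz : x ≠ z) (hyz : y ≠ z) :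
    kron (glue h x) (glue h y) * kron (glue h y) (glue h z) = 0 := by
  rw [kron_glue, kron_glue]
  simp only [kron]
  grind

lemma signCorr_glue_shared (h : a ≠ b) (hxy : x ≠ y) (hxz : x ≠ z) (hyz : y ≠ z) :
    signCorr (glue h x) (glue h y) (glue h y) (glue h z) =
      kron (glue h x) (glue h y) + kron (glue h y) (glue h z)
        - 2 * kron (glue h x) (glue h z) - 1 := by
  rw [signCorr, kron_self, kron_glue_mul_kron_glue_eq_zero h hxy hxz hyz]
  ring

lemma signCorr_glue_self (h : a ≠ b) (hac : a ≠ c) (hbc : b ≠ c) (u v : α) :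
    signCorr (glue h b) (glue h c) (glue h u) (glue h v) =
      (kron u a + kron u b) * (1 + kron v c) - (kron v a + kron v b) * (1 + kron u c)
        - kron u c + kron v c := by
  simp only [signCorr, kron_glue, kron_self, kron_of_ne h.symm, kron_of_ne hac.symm,
    kron_of_ne hbc.symm, kron_comm b, kron_comm c]
  ring

lemma glueSign_mul_signCorr_glue_left (h : a ≠ b) (hac : a ≠ c) (hbc : b ≠ c)
    (hxz : x ≠ z) (hyz : y ≠ z) :
    glueSign a b x y * signCorr (glue h b) (glue h c) (glue h y) (glue h z) =
      glueSign a b x y * (1 + 2 * kron z c) := by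
  rw [signCorr_glue_self h hac hbc]
  simp only [glueSign, kron]
  grind

lemma glueSign_mul_signCorr_glue_right (h : a ≠ b) (hac : a ≠ c) (hbc : b ≠ c)
    (hxy : x ≠ y) (hxz : x ≠ z) :
    glueSign a b y z * signCorr (glue h b) (glue h c) (glue h x) (glue h y) =
      -(glueSign a b y z * (1 + 2 * kron x c)) := by
  rw [signCorr_glue_self h hac hbc]
  simp only [glueSign, kron]
  grind

lemma glueWeight_eq_sum_kron (h : a ≠ b) (hac : a ≠ c) (hbc : b ≠ c) (hxy : x ≠ y)
    (hxz : x ≠ z) (hyz : y ≠ z) :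
    glueWeight h c x y z =
      2 + kron x a + kron z c + kron x b - kron x c - kron z a - kron z b
        + 5 * (kron x a * kron y b) + kron y b * kron z c
        - 3 * (kron x b * kron y a) - kron y c * kron z b
        + kron x a * kron y c + kron z c * kron y a
        - kron y b * kron z a - kron y b * kron x c - 2 * (kron x a * kron z b)
        + 3 * (kron z b * kron y a) + kron x b * kron y c - kron y c * kron z a
        - kron y a * kron x c - 2 * (kron z a * kron x b)
        + 2 * (kron x a * kron y b * kron z c)
        - 2 * (kron x b * kron y a * kron z c) + 2 * (kron x c * kron z a * kron y b)
        - 2 * (kron x c * kron z b * kron y a) := by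
  have h_signs := glueSign_mul_glueSign_eq_zero (a := a) (b := b) (y := y) hxz
  have h_shared := signCorr_glue_shared h hxy hxz hyz
  have h_left := glueSign_mul_signCorr_glue_left h hac hbc hxz hyz
  have h_right := glueSign_mul_signCorr_glue_right h hac hbc hxy hxz
  calc
    glueWeight h c x y z =
        2 + glueSign a b x y * (4 + 2 * kron z c) + glueSign a b y z * (2 - 2 * kron x c)
          + kron (glue h x) (glue h y) + kron (glue h y) (glue h z)
          - 2 * kron (glue h x) (glue h z)
          + signCorr (glue h b) (glue h c) (glue h x) (glue h y)
          + signCorr (glue h b) (glue h c) (glue h y) (glue h z) := by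
      rw [glueWeight]
      linear_combination 3 * h_signs + h_shared + h_left + h_right
    _ = _ := by
      simp only [signCorr_glue_self h hac hbc, kron_glue, glueSign, kron_of_ne hxy, kron_of_ne hxz,
        kron_of_ne hyz]
      ring

/-- `12 n` times the mean of `occ` over the conjugates of a permutation of `n` points whose `k`-th
power has `fₖ` fixed points. -/
def occPoly (n f₁ f₂ f₃ : ℚ) : ℚ :=
  n * (n - 1) * (n - 2) + f₁ * (n - 1) * (n - 2) - (n - f₁) * (n - 2)
    + 3 * f₁ * (f₁ - 1) * (n - 2) - 2 * (f₂ - f₁) * (n - 2) - f₁ * (n - f₁)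
    + f₁ * (f₁ - 1) * (f₁ - 2) - (f₃ - f₁)

lemma sum_glueWeight [Fintype α] (π : Perm α) :
    ∑ v : Fin 3 ↪ α,
        glueWeight (v.injective.ne zero_ne_one) (v 2) (π (v 0)) (π (v 1)) (π (v 2)) =
      2 * occPoly (Fintype.card α) (fixedCount π 1) (fixedCount π 2) (fixedCount π 3) := by
  have h₀₁ (v : Fin 3 ↪ α) : v 0 ≠ v 1 := v.injective.ne (by decide)
  have h₀₂ (v : Fin 3 ↪ α) : v 0 ≠ v 2 := v.injective.ne (by decide)
  have h₁₂ (v : Fin 3 ↪ α) : v 1 ≠ v 2 := v.injective.ne (by decide)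
  have h_weight (v : Fin 3 ↪ α) := glueWeight_eq_sum_kron (h₀₁ v) (h₀₂ v) (h₁₂ v)
    (π.injective.ne (h₀₁ v)) (π.injective.ne (h₀₂ v)) (π.injective.ne (h₁₂ v))
  simp (discharger := decide) only [h_weight, sum_add_distrib, sum_sub_distrib, ← mul_sum,
    sum_embedding_const, sum_embedding_fixed, sum_embedding_edge, sum_embedding_fixed_fixed,
    sum_embedding_swap, sum_embedding_fixed_edge, sum_embedding_path,
    sum_embedding_fixed_fixed_fixed, sum_embedding_swap_fixed, sum_embedding_threeCycle]
  rw [occPoly]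
  ring

end GlueWeight

section Averaging

variable {n N : ℕ}

/-- The number of occurrences of the vincular pattern `12-3`; positions are indexed from `0`. -/
def occ (π : Perm (Fin n)) : ℕ :=
  #{x : Fin n × Fin n × Fin n |
    (x.1 : ℕ) + 1 = x.2.1 ∧ x.2.1 < x.2.2 ∧ π x.1 < π x.2.1 ∧ π x.2.1 < π x.2.2}

lemma occ_eq_sum_embedding (π : Perm (Fin n)) :
    (occ π : ℚ) = ∑ v : Fin 3 ↪ Fin n,
      if (v 0 : ℕ) + 1 = v 1 ∧ v 1 < v 2 ∧ π (v 0) < π (v 1) ∧ π (v 1) < π (v 2) then 1 else 0 := by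
  rw [sum_embedding_eq_sum_distinct fun a b c : Fin n =>
    if (a : ℕ) + 1 = b ∧ b < c ∧ π a < π b ∧ π b < π c then (1 : ℚ) else 0]
  simp only [occ, card_filter, Nat.cast_sum, Nat.cast_ite, Nat.cast_one, Nat.cast_zero,
    Fintype.sum_prod_type]
  refine sum_congr rfl fun a _ => sum_congr rfl fun b _ => sum_congr rfl fun c _ => ?_
  rw [← ite_and]
  congr 1
  rw [eq_iff_iff, iff_and_self]
  grind

lemma occ_conj_eq_sum_embedding (π σ : Perm (Fin n)) :
    (occ (σ * π * σ⁻¹) : ℚ) = ∑ v : Fin 3 ↪ Fin n,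
      if (σ (v 0) : ℕ) + 1 = σ (v 1) ∧ σ (v 1) < σ (v 2) ∧ σ (π (v 0)) < σ (π (v 1)) ∧
        σ (π (v 1)) < σ (π (v 2)) then 1 else 0 := by
  rw [occ_eq_sum_embedding, ← (embeddingCongr (Equiv.refl (Fin 3)) σ).sum_comp]
  simp

lemma card_subtype_ne_equiv_fin (b : Fin (N + 1)) :
    Fintype.card ({v // v ≠ b} ≃ Fin N) = N.factorial := by
  rw [Fintype.card_equiv (finSuccAboveEquiv b).symm]
  simp

lemma sum_occ_conj (π : Perm (Fin (N + 1))) :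
    ∑ σ, (occ (σ * π * σ⁻¹) : ℚ) =
      N.factorial / 12 * occPoly (N + 1) (fixedCount π 1) (fixedCount π 2) (fixedCount π 3) := by
  have h₀₁ (v : Fin 3 ↪ Fin (N + 1)) : v 0 ≠ v 1 := v.injective.ne (by decide)
  have h₀₂ (v : Fin 3 ↪ Fin (N + 1)) : v 0 ≠ v 2 := v.injective.ne (by decide)
  have h₁₂ (v : Fin 3 ↪ Fin (N + 1)) : v 1 ≠ v 2 := v.injective.ne (by decide)
  have h_triple (v : Fin 3 ↪ Fin (N + 1)) := sum_adjacent_pattern_eq_glueWeight (N := N)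
    (h₀₁ v) (h₀₂ v) (h₁₂ v) (π.injective.ne (h₀₁ v)) (π.injective.ne (h₁₂ v))
  simp only [occ_conj_eq_sum_embedding]
  rw [sum_comm]
  simp only [h_triple, card_subtype_ne_equiv_fin, ← mul_sum, sum_glueWeight, Fintype.card_fin]
  push_cast
  ring

lemma card_mul_sum_eq_sum_sum_conj {G : Type*} [Group G] [Fintype G] {C : Finset G}
    (hC : ∀ σ, ∀ π ∈ C, σ * π * σ⁻¹ ∈ C) (f : G → ℚ) :
    Fintype.card G * ∑ π ∈ C, f π = ∑ π ∈ C, ∑ σ, f (σ * π * σ⁻¹) := by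
  have h_conj (σ : G) : ∑ π ∈ C, f (σ * π * σ⁻¹) = ∑ π ∈ C, f π :=
    sum_nbij' (fun π => σ * π * σ⁻¹) (fun π => σ⁻¹ * π * σ) (hC σ)
      (fun π hπ => by simpa using hC σ⁻¹ π hπ) (fun π _ => by group) (fun π _ => by group)
      (fun _ _ => rfl)
  rw [sum_comm]
  simp [h_conj]

end Averaging

section CycleCounts

variable {α : Type*} [Fintype α] [DecidableEq α] (π : Perm α) {k : ℕ}

lemma filter_card_support_cycleOf_eq_biUnion (hk : k ≠ 0) :
    ({x | #(π.cycleOf x).support = k} : Finset α) =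
      {c ∈ π.cycleFactorsFinset | #c.support = k}.biUnion Perm.support := by
  ext x
  simp only [mem_filter, mem_univ, true_and, mem_biUnion]
  constructor
  · intro hx
    have h_moved : x ∈ π.support := by
      refine Perm.mem_support.2 fun h_fixed => hk ?_
      rw [← hx, (Perm.cycleOf_eq_one_iff π).2 h_fixed, Perm.support_one, card_empty]
    exact ⟨π.cycleOf x, ⟨Perm.cycleOf_mem_cycleFactorsFinset_iff.2 h_moved, hx⟩,
      Perm.mem_support_cycleOf_iff.2 ⟨.refl _ _, h_moved⟩⟩
  · rintro ⟨c, ⟨hc, rfl⟩, hx⟩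
    rw [Perm.cycle_is_cycleOf hx hc]

lemma card_filter_card_support_cycleOf_eq (hk : k ≠ 0) :
    #{x | #(π.cycleOf x).support = k} = k * π.cycleType.count k := by
  have h_disjoint : (({c ∈ π.cycleFactorsFinset | #c.support = k} : Finset (Perm α)) :
      Set (Perm α)).PairwiseDisjoint Perm.support := fun c hc d hd hcd =>
    (π.cycleFactorsFinset_pairwise_disjoint (mem_filter.1 hc).1 (mem_filter.1 hd).1
      hcd).disjoint_support
  have h_count : π.cycleType.count k = #{c ∈ π.cycleFactorsFinset | #c.support = k} := by
    simp only [Perm.cycleType_def, Multiset.count_map, Function.comp_apply, eq_comm (a := k)]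
    rfl
  rw [filter_card_support_cycleOf_eq_biUnion π hk, card_biUnion h_disjoint,
    sum_congr rfl fun c hc => (mem_filter.1 hc).2, sum_const, smul_eq_mul, mul_comm, h_count]

lemma pow_prime_apply_eq_self_iff (hk : k.Prime) (x : α) :
    (π ^ k) x = x ↔ π x = x ∨ #(π.cycleOf x).support = k := by
  by_cases hx : π x = x
  · simp [hx, Perm.pow_apply_eq_self_of_apply_eq_self hx]
  · have hmem : x ∈ (π.cycleOf x).support :=
      Perm.mem_support_cycleOf_iff.2 ⟨.refl _ _, Perm.mem_support.2 hx⟩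
    have h_ne_one : #(π.cycleOf x).support ≠ 1 := Perm.card_support_ne_one _
    rw [(Perm.isCycleOn_support_cycleOf π x).pow_apply_eq hmem, Nat.dvd_prime hk]
    simp [hx, h_ne_one]

lemma fixedCount_prime (hk : k.Prime) :
    fixedCount π k = fixedCount π 1 + k * π.cycleType.count k := by
  have h_disjoint : Disjoint ({x | π x = x} : Finset α)
      ({x | #(π.cycleOf x).support = k} : Finset α) := by
    refine disjoint_filter.2 fun x _ hx => ?_
    rw [Perm.cycleOf_eq_one_iff π |>.2 hx]
    simpa using hk.ne_zero.symm
  simp only [fixedCount, pow_one, pow_prime_apply_eq_self_iff π hk, filter_or,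
    card_union_of_disjoint h_disjoint, card_filter_card_support_cycleOf_eq π hk.ne_zero]
  push_cast
  rfl

lemma count_parts_partition_of_ne_one (hk : k ≠ 1) :
    π.partition.parts.count k = π.cycleType.count k := by
  simp [Perm.parts_partition, Multiset.count_replicate, hk.symm]

lemma fixedCount_one : fixedCount π 1 = π.partition.parts.count 1 := by
  have h_not_mem : 1 ∉ π.cycleType := fun h => absurd (Perm.two_le_of_mem_cycleType h) (by decide)
  have h_compl : ({x | π x = x} : Finset α) = π.supportᶜ := by
    ext x
    simp
  rw [Perm.parts_partition, Multiset.count_add, Multiset.count_eq_zero.2 h_not_mem, zero_add,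
    Multiset.count_replicate_self, ← card_compl, ← h_compl]
  simp [fixedCount]

end CycleCounts

lemma conj_mem_conjClass {n : ℕ} {lam : n.Partition} (σ π : Perm (Fin n))
    (hπ : π ∈ conjClass n lam) : σ * π * σ⁻¹ ∈ conjClass n lam := by
  have h_conj : π.partition = (σ * π * σ⁻¹).partition :=
    Perm.partition_eq_of_isConj.1 (isConj_iff.2 ⟨σ, rfl⟩)
  simpa only [conjClass, mem_filter, mem_univ, true_and, h_conj] using hπ

lemma fixedCount_one_of_mem_conjClass {n : ℕ} {lam : n.Partition} {π : Perm (Fin n)}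
    (hπ : π ∈ conjClass n lam) : fixedCount π 1 = lam.parts.count 1 := by
  rw [fixedCount_one, (mem_filter.1 hπ).2]

lemma fixedCount_prime_of_mem_conjClass {n k : ℕ} {lam : n.Partition} {π : Perm (Fin n)}
    (hπ : π ∈ conjClass n lam) (hk : k.Prime) :
    fixedCount π k = lam.parts.count 1 + k * lam.parts.count k := by
  rw [fixedCount_prime π hk, fixedCount_one_of_mem_conjClass hπ,
    ← count_parts_partition_of_ne_one π hk.ne_one, (mem_filter.1 hπ).2]

lemma sum_conjClass_occ {N : ℕ} (lam : (N + 1).Partition) :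
    12 * (N + 1) * ∑ π ∈ conjClass (N + 1) lam, (occ π : ℚ) =
      #(conjClass (N + 1) lam) * occPoly (N + 1) (lam.parts.count 1)
        (lam.parts.count 1 + 2 * lam.parts.count 2)
        (lam.parts.count 1 + 3 * lam.parts.count 3) := by
  have h_avg := card_mul_sum_eq_sum_sum_conj (C := conjClass (N + 1) lam) conj_mem_conjClass
    fun π => (occ π : ℚ)
  have h_conj (π) (hπ : π ∈ conjClass (N + 1) lam) :
      ∑ σ : Perm (Fin (N + 1)), (occ (σ * π * σ⁻¹) : ℚ) =
        N.factorial / 12 * occPoly (N + 1) (lam.parts.count 1)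
          (lam.parts.count 1 + 2 * lam.parts.count 2)
          (lam.parts.count 1 + 3 * lam.parts.count 3) := by
    rw [sum_occ_conj, fixedCount_one_of_mem_conjClass hπ,
      fixedCount_prime_of_mem_conjClass hπ Nat.prime_two,
      fixedCount_prime_of_mem_conjClass hπ Nat.prime_three]
    norm_cast
  rw [sum_congr rfl h_conj, sum_const, nsmul_eq_mul, Fintype.card_perm, Fintype.card_fin,
    Nat.factorial_succ] at h_avg
  have h_fact : (N.factorial : ℚ) ≠ 0 := by positivity
  apply mul_left_cancel₀ h_fact
  push_cast at h_avg ⊢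
  linear_combination 12 * h_avg

theorem stmt15 (n : ℕ) (hn : 3 ≤ n) (lam : n.Partition)
    (p q r X₁ X₂ X₃ X₄ : ℚ)
    (hp : p = (lam.parts.count 1 : ℚ)) (hq : q = (lam.parts.count 2 : ℚ))
    (hr : r = (lam.parts.count 3 : ℚ))
    (hX1 : X₁ = p - 1) (hX2 : X₂ = (p - 1) * (p - 2) / 2 + q - 1)
    (hX3 : X₃ = (p - 1) * (p - 2) / 2 - q)
    (hX4 : X₄ = (p - 1) * (p - 2) * (p - 3) / 3 - p - r + 2) :
    (∑ π ∈ conjClass n lam,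
      ((((Finset.univ : Finset (Fin n × Fin n × Fin n)).filter fun x =>
          (x.1 : ℕ) + 1 = (x.2.1 : ℕ) ∧ x.2.1 < x.2.2 ∧ π x.1 < π x.2.1 ∧ π x.2.1 < π x.2.2).card : ℚ)))
    = ((conjClass n lam).card : ℚ) *
      (((n - 1).choose 2 : ℚ) / 6 + ((n : ℚ) ^ 2 + 3 * (n : ℚ) - 6) * X₁ / (12 * (n : ℚ))
        + ((n : ℚ) + 2) * X₂ / (12 * (n : ℚ)) + (5 * (n : ℚ) - 6) * X₃ / (12 * (n : ℚ))
        + X₄ / (4 * (n : ℚ))) := by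
  obtain ⟨N, rfl⟩ : ∃ N, n = N + 1 := ⟨n - 1, by omega⟩
  have h_sum := sum_conjClass_occ lam
  simp only [occ] at h_sum
  rw [← hp, ← hq, ← hr, mul_comm, ← eq_div_iff (by positivity)] at h_sum
  rw [h_sum, occPoly, hX1, hX2, hX3, hX4, Nat.add_sub_cancel, Nat.cast_choose_two]
  push_cast
  field_simp
  ring
end
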